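/- arXiv:1602.08643 — 3 statements merged into one kernel-verified Lean document; each statement's English description precedes it below -/
import Mathlib

section
/- The thermodynamic limit G_∞(A) = lim_{N→∞} G_N(A) exists and is given by G_∞(A) = −log( (∫_ℝ exp(−(ψ₁+P)(y) − E^cg(A,y)) dy) / (∫_ℝ exp(−ψ(y) − E^cg_{h=0}(A,y)) dy) ), where ψ₁(y) = ψ(y) + h₁·y and E^cg_{h=0}(A,y) = W'(A)·(A − y). -/
/-!
The chain partition functions are iterated convolutions: in the variables `y_i = u_i - u_{i-1}` the
integral with `N` bonds and end point `N A` is `(a_1 ∗ ⋯ ∗ a_N)(N A)`, where `a_i` is the Boltzmann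
weight of the `i`-th bond (`chain_integral`). Let `s` be the stress dual to `A`, that is
`Lam' s = A` for the logarithm `Lam` of the one-bond partition function at given stress. Tilting every
factor by `exp (s y)` multiplies both partition functions by `exp (s N A)`, which cancels in the
difference of free energies. After the tilt the reference factor is `p = exp (-ψ + s y)`, with mean
`A`, and the perturbed factors are `q_0 = exp (-(ψ + P) + (s - h_1) y)` and
`q_k = exp (-ψ + (s - h_{k+1}) y)`, which are summably close to `p` in `L¹`.

The core is `tendsto_log_ch`: at the mean, the ratio of the convolution of the `q_k` to that of copies
of `p` tends to `∏ (∫ q_k / ∫ p)`. The factors are exchanged one at a time. Each exchange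
contributes a ratio `(q_k ∗ g) / (p ∗ g)` where `g` is a convolution of the other factors, and a weak
local limit theorem says that `g` is asymptotically constant near the mean, so that this ratio tends
to `∫ q_k / ∫ p`; dominated convergence for series finishes the argument.

The local limit theorem uses no Fourier analysis. The upper bound on the second derivatives of the
potentials gives the midpoint inequality `g(x)² exp (-κ t² / n) ≤ g(x + t) g(x - t)`, which is stable
under convolution with `n` additive (`Nice.cv`). It yields the upper bound `g ≤ √(κ / n) ∫ g`
(`Nice.le_sup`), together with exponential moments a matching lower bound near the mean
(`Nice.exists_lower`), and then flatness of `log g` there (`Nice.log_flat`).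

Finally `∑ (Lam s - Lam (s - h_i))` over `i ≥ 2` is `A H` plus the infimum in the coarse-grained
energy: by Legendre duality that infimum is attained at the strains `Lam' (s - h_i)`
(`infJinf_eq`, `coarse_energy_eq`), and `W' A = s` (`deriv_W`).
-/

noncomputable section

open MeasureTheory Real Filter

/-- Extend interior degrees of freedom `u : ℝ^(n-1)` to the whole chain via the
boundary conditions `u 0 = 0` and `u n = b`. -/
def bc (n : ℕ) (b : ℝ) (u : Fin (n - 1) → ℝ) : ℕ → ℝ := fun i =>
  if h : 0 < i ∧ i < n then u ⟨i - 1, by omega⟩ else if i = 0 then 0 else b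

/-- The chain energy `∑_{i=1}^n φ_i (u_i - u_{i-1})` with boundary conditions
`u 0 = 0`, `u n = b`. -/
def chainE (φ : ℕ → ℝ → ℝ) (n : ℕ) (b : ℝ) (u : Fin (n - 1) → ℝ) : ℝ :=
  ∑ i ∈ Finset.range n, φ (i + 1) (bc n b u (i + 1) - bc n b u i)

/-- The free energy `-log ∫_{ℝ^{N-1}} exp(-∑ φ_i(u_i-u_{i-1}) - defect(u₁)) du`. -/
def freeEnergy (φ : ℕ → ℝ → ℝ) (defect : ℝ → ℝ) (N : ℕ) (A : ℝ) : ℝ :=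
  - Real.log (∫ u : Fin (N - 1) → ℝ,
      Real.exp (-(chainE φ N (N * A) u) - defect (bc N (N * A) u 1)))

/-- The Cauchy–Born strain energy `W(A)`. -/
def W (ψ : ℝ → ℝ) (A : ℝ) : ℝ :=
  ⨆ σ : ℝ, (σ * A - Real.log (∫ y : ℝ, Real.exp (-ψ y + σ * y)))

/-- `inf { J_∞(A;v) : v' ∈ ℓ² }`, where
`J_∞(A;v) = ∑_{i=2}^∞ [W(A + v'_i) - W(A) - W'(A) v'_i + h_i v'_i]`
(the sequence `v i` below stands for the increments `v'_{i+2}`). -/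
def infJinf (Wf : ℝ → ℝ) (h : ℕ → ℝ) (A : ℝ) : ℝ :=
  sInf { E : ℝ | ∃ v : ℕ → ℝ, Summable (fun i => (v i) ^ 2) ∧
    E = ∑' i : ℕ, (Wf (A + v i) - Wf A - deriv Wf A * v i + h (i + 2) * v i) }

/-- The coarse-grained energy with forces
`E^cg(A,y) = (A-y) W'(A) + A H + inf J_∞(A;·)`. -/
def EcgF (ψ : ℝ → ℝ) (h : ℕ → ℝ) (A y : ℝ) : ℝ :=
  (A - y) * deriv (W ψ) A + A * (∑' i : ℕ, h (i + 2)) + infJinf (W ψ) h A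


/-! ### Convolution of positive functions -/

/-- Convolution of two real functions on the line. -/
def cv (f g : ℝ → ℝ) (x : ℝ) : ℝ := ∫ y, f y * g (x - y)

/-- Continuous, positive, bounded functions all of whose exponential moments are finite. -/
structure Reg (f : ℝ → ℝ) : Prop where
  cont : Continuous f
  pos : ∀ x, 0 < f x
  bdd : ∃ C, ∀ x, f x ≤ C
  int : ∀ l : ℝ, Integrable fun x => exp (l * x) * f x

lemma cv_eq_convolution (f g : ℝ → ℝ) :
    cv f g = convolution f g (ContinuousLinearMap.mul ℝ ℝ) volume := by
  funext x; rfl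

lemma cv_comm (f g : ℝ → ℝ) : cv f g = cv g f := by
  funext x
  have := integral_sub_left_eq_self (fun y => f y * g (x - y)) volume x
  simp only [cv, ← this]
  refine integral_congr_ae (ae_of_all _ fun y => ?_)
  simp [mul_comm]

lemma exp_cv (s : ℝ) (f g : ℝ → ℝ) (x : ℝ) :
    exp (s * x) * cv f g x = cv (fun y => exp (s * y) * f y) (fun y => exp (s * y) * g y) x := by
  simp only [cv, ← integral_const_mul]
  refine integral_congr_ae (ae_of_all _ fun y => ?_)
  have : exp (s * x) = exp (s * y) * exp (s * (x - y)) := by rw [← exp_add]; ring_nf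
  simp only [this]; ring

namespace Reg

variable {f g k : ℝ → ℝ}

lemma integrable (hf : Reg f) : Integrable f := by simpa using hf.int 0

lemma integral_pos (hf : Reg f) : 0 < ∫ x, f x := by
  rw [integral_pos_iff_support_of_nonneg (fun x => (hf.pos x).le) hf.integrable]
  have : Function.support f = Set.univ := by
    ext x; simpa using (hf.pos x).ne'
  simp [this]

lemma bddAbove (hf : Reg f) : BddAbove (Set.range fun x => ‖f x‖) := by
  obtain ⟨C, hC⟩ := hf.bdd
  refine ⟨C, ?_⟩
  rintro _ ⟨x, rfl⟩
  simpa [abs_of_pos (hf.pos x)] using hC x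

lemma integrable_mul (hf : Integrable f) (hg : Reg g) (x : ℝ) :
    Integrable fun y => f y * g (x - y) := by
  obtain ⟨C, hC⟩ := hg.bdd
  refine hf.mul_bdd (c := C) ?_ ?_
  · exact (hg.cont.comp (by fun_prop)).aestronglyMeasurable
  · refine ae_of_all _ fun y => ?_
    simpa [abs_of_pos (hg.pos _)] using hC _

lemma cv (hf : Reg f) (hg : Reg g) : Reg (cv f g) where
  cont := by
    rw [cv_eq_convolution]
    exact hg.bddAbove.continuous_convolution_right_of_integrable _ hf.integrable hg.cont
  pos x := by
    have hi := integrable_mul hf.integrable hg x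
    have hp : ∀ y, 0 < f y * g (x - y) := fun y => mul_pos (hf.pos _) (hg.pos _)
    rw [_root_.cv, integral_pos_iff_support_of_nonneg (fun y => (hp y).le) hi]
    have : (Function.support fun y => f y * g (x - y)) = Set.univ := by
      ext y; simpa using (hp y).ne'
    simp [this]
  bdd := by
    obtain ⟨C, hC⟩ := hg.bdd
    refine ⟨∫ y, f y * C, fun x => ?_⟩
    exact integral_mono (integrable_mul hf.integrable hg x) (hf.integrable.mul_const C)
      fun y => mul_le_mul_of_nonneg_left (hC _) (hf.pos _).le
  int l := by
    simp only [exp_cv]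
    rw [cv_eq_convolution]
    exact (hf.int l).integrable_convolution _ (hg.int l)

lemma integral_exp_cv (hf : Reg f) (hg : Reg g) (l : ℝ) :
    ∫ x, exp (l * x) * _root_.cv f g x
      = (∫ x, exp (l * x) * f x) * ∫ x, exp (l * x) * g x := by
  simp only [exp_cv]
  rw [cv_eq_convolution, integral_convolution _ (hf.int l) (hg.int l)]
  rfl

lemma integral_cv (hf : Reg f) (hg : Reg g) :
    ∫ x, _root_.cv f g x = (∫ x, f x) * ∫ x, g x := by
  simpa using integral_exp_cv hf hg 0

lemma cv_assoc (hf : Reg f) (hg : Reg g) (hk : Reg k) :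
    _root_.cv (_root_.cv f g) k = _root_.cv f (_root_.cv g k) := by
  have nrm : ∀ {u : ℝ → ℝ}, Reg u → (fun x => ‖u x‖) = u := fun hu => by
    funext x; simpa using (hu.pos x).le
  funext x
  simp only [cv_eq_convolution]
  refine convolution_assoc _ _ _ _ (fun a b c => by simp [mul_assoc])
    hf.cont.aestronglyMeasurable hg.cont.aestronglyMeasurable hk.cont.aestronglyMeasurable ?_ ?_ ?_
  · exact ae_of_all _ fun y => integrable_mul hf.integrable hg y
  · rw [nrm hg, nrm hk]
    exact ae_of_all _ fun y => integrable_mul hg.integrable hk y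
  · rw [nrm hg, nrm hk, nrm hf]
    have := integrable_mul hf.integrable (hg.cv hk) x
    rw [cv_eq_convolution] at this
    exact this

end Reg

/-- Cauchy–Schwarz in the form used throughout: a pointwise bound `f² ≤ a b` integrates. -/
lemma sq_integral_le {f a b : ℝ → ℝ} (ha : ∀ x, 0 < a x) (hb : ∀ x, 0 < b x)
    (hai : Integrable a) (hbi : Integrable b) (h : ∀ x, f x ^ 2 ≤ a x * b x) :
    (∫ x, f x) ^ 2 ≤ (∫ x, a x) * ∫ x, b x := by
  -- for every `s`, `2 s f ≤ s² a + b`, so the quadratic `s² ∫a - 2 s ∫f + ∫b` is nonnegative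
  by_cases hfi : Integrable f
  swap
  · rw [integral_undef hfi]
    have h1 : 0 ≤ ∫ x, a x := integral_nonneg fun x => (ha x).le
    have h2 : 0 ≤ ∫ x, b x := integral_nonneg fun x => (hb x).le
    norm_num; positivity
  have key : ∀ s : ℝ, 0 ≤ (∫ x, a x) * (s * s) + (-2 * ∫ x, f x) * s + ∫ x, b x := by
    intro s
    have : ∫ x, (a x * (s * s) + (-2 * f x) * s + b x) =
        (∫ x, a x) * (s * s) + (-2 * ∫ x, f x) * s + ∫ x, b x := by
      rw [integral_add, integral_add, integral_mul_const, integral_mul_const, integral_const_mul]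
      · exact hai.mul_const _
      · exact (hfi.const_mul _).mul_const _
      · exact (hai.mul_const _).add ((hfi.const_mul _).mul_const _)
      · exact hbi
    rw [← this]
    refine integral_nonneg fun x => ?_
    have h1 := h x
    have h2 := ha x
    have : 0 ≤ a x * (a x * (s * s) + (-2 * f x) * s + b x) := by
      nlinarith [sq_nonneg (a x * s - f x)]
    exact nonneg_of_mul_nonneg_right this h2
  have := discrim_le_zero key
  unfold discrim at this
  nlinarith

/-! ### Semi-log-convex functions with controlled exponential moments -/

/-- The class of functions that behave like an `n`-fold convolution of densities `exp (-φ)` with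
`φ'' ≤ κ` and mean close to `A`: the midpoint form `semi` of `(-log g)'' ≤ κ / n`, and a bound `mom`
of the exponential moments by those of a Gaussian of mean `n A` and variance `2 C n`, up to a factor
`exp β`. The class is closed under convolution, `n` and `β` being additive. -/
structure Nice (κ C A : ℝ) (n : ℕ) (β : ℝ) (g : ℝ → ℝ) : Prop extends Reg g where
  semi : ∀ x t, g x ^ 2 * exp (-(κ / n) * t ^ 2) ≤ g (x + t) * g (x - t)
  mom : ∀ l : ℝ, |l| ≤ 1 →
    ∫ x, exp (l * x) * g x ≤ (∫ x, g x) * exp (l * (n * A) + C * n * l ^ 2 + β)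

namespace Nice

variable {κ C A β β' : ℝ} {n m : ℕ} {f g : ℝ → ℝ}

lemma cv (hn : 1 ≤ n) (hm : 1 ≤ m) (hf : Nice κ C A n β f) (hg : Nice κ C A m β' g) :
    Nice κ C A (n + m) (β + β') (cv f g) where
  toReg := hf.toReg.cv hg.toReg
  semi x t := by
    have hn' : (0 : ℝ) < n := by exact_mod_cast hn
    have hm' : (0 : ℝ) < m := by exact_mod_cast hm
    -- shift the two factors by `θ t` and `(1 - θ) t`, the choice of `θ` that gives `κ / (n + m)`
    set θ : ℝ := n / (n + m) with hθ
    have e1 : _root_.cv f g (x + t) = ∫ y, f (y + θ * t) * g (x - y + (1 - θ) * t) := by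
      rw [_root_.cv, ← integral_add_right_eq_self _ (θ * t)]
      refine integral_congr_ae (ae_of_all _ fun y => ?_)
      simp only; congr 2; ring
    have e2 : _root_.cv f g (x - t) = ∫ y, f (y - θ * t) * g (x - y - (1 - θ) * t) := by
      rw [_root_.cv, ← integral_sub_right_eq_self _ (θ * t)]
      refine integral_congr_ae (ae_of_all _ fun y => ?_)
      simp only; congr 2; ring
    have i1 : Integrable fun y => f (y + θ * t) * g (x - y + (1 - θ) * t) := by
      convert (Reg.integrable_mul hf.integrable hg.toReg (x + t)).comp_add_right (θ * t) using 3
      congr 1; ring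
    have i2 : Integrable fun y => f (y - θ * t) * g (x - y - (1 - θ) * t) := by
      convert (Reg.integrable_mul hf.integrable hg.toReg (x - t)).comp_sub_right (θ * t) using 3
      congr 1; ring
    have ex : exp (-(κ / ((n + m : ℕ) : ℝ)) * t ^ 2)
        = exp (-(κ / n) * (θ * t) ^ 2) * exp (-(κ / m) * ((1 - θ) * t) ^ 2) := by
      rw [← exp_add]
      congr 1
      rw [hθ]; push_cast
      field_simp
      ring
    have hs : (_root_.cv f g x) ^ 2 * exp (-(κ / ((n + m : ℕ) : ℝ)) * t ^ 2)
        = (∫ y, exp (-(κ / ((n + m : ℕ) : ℝ)) * t ^ 2 / 2) * (f y * g (x - y))) ^ 2 := by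
      rw [integral_const_mul, mul_pow, ← exp_nat_mul, _root_.cv, mul_comm]
      congr 2; push_cast; ring
    rw [hs, e1, e2]
    refine sq_integral_le (fun y => mul_pos (hf.pos _) (hg.pos _))
      (fun y => mul_pos (hf.pos _) (hg.pos _)) i1 i2 fun y => ?_
    · have h1 := hf.semi y (θ * t)
      have h2 := hg.semi (x - y) ((1 - θ) * t)
      have h3 : exp (-(κ / ((n + m : ℕ) : ℝ)) * t ^ 2 / 2) ^ 2
          = exp (-(κ / ((n + m : ℕ) : ℝ)) * t ^ 2) := by
        rw [← exp_nat_mul]; congr 1; push_cast; ring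
      rw [mul_pow, h3, ex, mul_pow (f y)]
      calc _ = (f y ^ 2 * exp (-(κ / n) * (θ * t) ^ 2)) *
            (g (x - y) ^ 2 * exp (-(κ / m) * ((1 - θ) * t) ^ 2)) := by ring
        _ ≤ _ := mul_le_mul h1 h2 (by positivity)
            (mul_pos (hf.pos _) (hf.pos _)).le
        _ = _ := by ring
  mom l hl := by
    rw [hf.toReg.integral_exp_cv hg.toReg, hf.toReg.integral_cv hg.toReg]
    have h1 := hf.mom l hl
    have h2 := hg.mom l hl
    have ex : exp (l * ((n + m : ℕ) * A) + C * (n + m : ℕ) * l ^ 2 + (β + β'))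
        = exp (l * (n * A) + C * n * l ^ 2 + β) * exp (l * (m * A) + C * m * l ^ 2 + β') := by
      rw [← exp_add]; push_cast; ring_nf
    rw [ex]
    have := hf.toReg.integral_pos
    calc _ ≤ _ := mul_le_mul h1 h2
            (integral_nonneg fun x => mul_nonneg (exp_pos _).le (hg.pos x).le) (by positivity)
      _ = _ := by ring

lemma mono (h : Nice κ C A n β g) (hβ : β ≤ β') : Nice κ C A n β' g where
  toReg := h.toReg
  semi := h.semi
  mom l hl := (h.mom l hl).trans (mul_le_mul_of_nonneg_left
    (exp_le_exp.2 (by linarith)) h.toReg.integral_pos.le)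

/-- The sup bound of order `n^{-1/2}`: a semi-log-convex function large at `x` stays large on the
scale `√n` on at least one of the two sides of `x`. -/
lemma le_sup (hκ : 0 < κ) (hn : 1 ≤ n) (h : Nice κ C A n β g) (x : ℝ) :
    g x * √n ≤ √κ * ∫ y, g y := by
  have hn' : (0 : ℝ) < n := by exact_mod_cast hn
  have hb : 0 < κ / (2 * n) := by positivity
  have i1 : Integrable fun t => g (x + t) := h.integrable.comp_add_left x
  have i2 : Integrable fun t => g (x - t) := h.integrable.comp_sub_left x
  have e1 : ∫ t, g (x + t) = ∫ y, g y := integral_add_left_eq_self _ x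
  have e2 : ∫ t, g (x - t) = ∫ y, g y := integral_sub_left_eq_self _ _ x
  have key : ∫ t, 2 * g x * exp (-(κ / (2 * n)) * t ^ 2) ≤ ∫ t, (g (x + t) + g (x - t)) := by
    refine integral_mono ((integrable_exp_neg_mul_sq hb).const_mul _) (i1.add i2) fun t => ?_
    have h1 := h.semi x t
    have h2 := h.pos (x + t)
    have h3 := h.pos (x - t)
    have h4 := h.pos x
    have h5 : exp (-(κ / (2 * n)) * t ^ 2) ^ 2 = exp (-(κ / n) * t ^ 2) := by
      rw [← exp_nat_mul]; congr 1; push_cast; field_simp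
    rw [← h5] at h1
    refine abs_le_of_sq_le_sq' ?_ (by positivity) |>.2
    nlinarith [sq_nonneg (g (x + t) - g (x - t))]
  rw [integral_const_mul, integral_gaussian, integral_add i1 i2, e1, e2] at key
  have hs : √n / √κ ≤ √(π / (κ / (2 * n))) := by
    rw [← sqrt_div hn'.le]
    apply sqrt_le_sqrt
    have : π / (κ / (2 * n)) = 2 * π * (n / κ) := by field_simp
    rw [this]
    have : 0 < n / κ := by positivity
    nlinarith [pi_gt_three]
  have hp := h.pos x
  have : g x * (√n / √κ) ≤ ∫ y, g y := by nlinarith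
  have hk : 0 < √κ := sqrt_pos.2 hκ
  calc g x * √n = √κ * (g x * (√n / √κ)) := by field_simp
    _ ≤ _ := by gcongr

/-- Within a distance of order `√n` of the approximate mean `n A`, the function reaches a value of
order `n^{-1/2}`: by the exponential moments, most of the mass lies there. -/
lemma exists_large {R B : ℝ} (hR : 1 ≤ R) (hRB : 4 * exp (C + B) ≤ exp R) (hn : 1 ≤ n)
    (h : Nice κ C A n β g) (hβ : β ≤ B) :
    ∃ x, |x - n * A| ≤ R * √n ∧ (∫ y, g y) ≤ 8 * R * (g x * √n) := by
  have hn' : (1 : ℝ) ≤ n := by exact_mod_cast hn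
  have hs : 1 ≤ √(n : ℝ) := by rw [one_le_sqrt]; exact hn'
  have hs0 : 0 < √(n : ℝ) := by linarith
  set I := ∫ y, g y with hI
  have hIpos : 0 < I := h.toReg.integral_pos
  by_contra! hc
  set x₀ : ℝ := n * A with hx₀
  set l : ℝ := 1 / √n with hl
  have hl0 : 0 < l := by positivity
  have hl1 : l ≤ 1 := by rw [hl, div_le_one hs0]; exact hs
  have hl2 : n * l ^ 2 = 1 := by
    rw [hl, div_pow, sq_sqrt (by positivity)]; field_simp
  have m1 := h.mom l (by rw [abs_of_pos hl0]; exact hl1)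
  have m2 := h.mom (-l) (by rw [abs_neg, abs_of_pos hl0]; exact hl1)
  -- the two exponential moments centred at `x₀`
  have c1 : ∫ x, exp (l * (x - x₀)) * g x ≤ I * exp (C + B) := by
    have : ∀ x, exp (l * (x - x₀)) * g x = exp (-(l * x₀)) * (exp (l * x) * g x) := fun x => by
      rw [← mul_assoc, ← exp_add]; congr 2; ring
    simp only [this]
    rw [integral_const_mul]
    calc _ ≤ exp (-(l * x₀)) * (I * exp (l * x₀ + C * n * l ^ 2 + β)) := by gcongr
      _ = I * exp (C + β) := by
        rw [mul_left_comm, ← exp_add, mul_assoc C, hl2]; ring_nf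
      _ ≤ _ := by gcongr
  have c2 : ∫ x, exp (-l * (x - x₀)) * g x ≤ I * exp (C + B) := by
    have : ∀ x, exp (-l * (x - x₀)) * g x = exp (l * x₀) * (exp (-l * x) * g x) := fun x => by
      rw [← mul_assoc, ← exp_add]; congr 2; ring
    simp only [this]
    rw [integral_const_mul]
    calc _ ≤ exp (l * x₀) * (I * exp (-l * x₀ + C * n * (-l) ^ 2 + β)) := by gcongr
      _ = I * exp (C + β) := by
        rw [mul_left_comm, ← exp_add, neg_sq, mul_assoc C, hl2]; ring_nf
      _ ≤ _ := by gcongr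
  have j1 : Integrable fun x => exp (l * (x - x₀)) * g x := by
    refine ((h.int l).const_mul (exp (-(l * x₀)))).congr (ae_of_all _ fun x => ?_)
    simp only
    rw [← mul_assoc, ← exp_add]; congr 2; ring
  have j2 : Integrable fun x => exp (-l * (x - x₀)) * g x := by
    refine ((h.int (-l)).const_mul (exp (l * x₀))).congr (ae_of_all _ fun x => ?_)
    simp only
    rw [← mul_assoc, ← exp_add]; congr 2; ring
  set S : Set ℝ := Set.Icc (x₀ - R * √n) (x₀ + R * √n) with hS
  set d : ℝ := I / (8 * R * √n) with hd
  have hRpos : 0 < R := by linarith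
  have hdpos : 0 < d := by positivity
  have iS : Integrable (S.indicator fun _ => d) :=
    (integrable_indicator_iff measurableSet_Icc).2 (integrableOn_const (by simp))
  have hle : ∀ x, g x ≤ S.indicator (fun _ => d) x +
      exp (-R) * (exp (l * (x - x₀)) * g x + exp (-l * (x - x₀)) * g x) := by
    intro x
    have hg := h.pos x
    by_cases hx : |x - x₀| ≤ R * √n
    · have hxS : x ∈ S := by
        rw [hS, Set.mem_Icc]; rw [abs_le] at hx; constructor <;> linarith
      have : g x ≤ d := by
        rw [hd, le_div_iff₀ (by positivity)]; have := hc x hx; linarith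
      rw [Set.indicator_of_mem hxS]
      have : 0 ≤ exp (-R) * (exp (l * (x - x₀)) * g x + exp (-l * (x - x₀)) * g x) := by positivity
      linarith
    · push Not at hx
      have h0 : 0 ≤ S.indicator (fun _ => d) x := Set.indicator_nonneg (fun _ _ => hdpos.le) x
      have hR' : R ≤ |l * (x - x₀)| := by
        rw [abs_mul, abs_of_pos hl0, hl, div_mul_eq_mul_div, one_mul, le_div_iff₀ hs0]; exact hx.le
      have : exp R ≤ exp (l * (x - x₀)) + exp (-l * (x - x₀)) := by
        rcases le_abs.1 hR' with h1 | h1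
        · have := exp_le_exp.2 h1; have := exp_pos (-l * (x - x₀)); linarith
        · rw [neg_mul]; have := exp_le_exp.2 h1; have := exp_pos (l * (x - x₀)); linarith
      have h2 : exp (-R) * exp R = 1 := by rw [← exp_add]; simp
      have h3 : exp (-R) * exp R * g x ≤
          exp (-R) * (exp (l * (x - x₀)) + exp (-l * (x - x₀))) * g x := by gcongr
      rw [h2] at h3
      nlinarith
  have j12 : Integrable fun x =>
      exp (-R) * (exp (l * (x - x₀)) * g x + exp (-l * (x - x₀)) * g x) :=
    (j1.add j2).const_mul (exp (-R))
  have hint := integral_mono h.integrable (iS.add j12) hle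
  simp only [Pi.add_apply] at hint
  rw [integral_add iS j12] at hint
  rw [integral_const_mul, integral_add j1 j2, integral_indicator measurableSet_Icc,
    setIntegral_const, Real.volume_real_Icc, smul_eq_mul] at hint
  have hmax : max (x₀ + R * √n - (x₀ - R * √n)) 0 = 2 * (R * √n) := by
    rw [max_eq_left] <;> [ring; (ring_nf; positivity)]
  rw [hmax] at hint
  have hd' : 2 * (R * √n) * d = I / 4 := by rw [hd]; field_simp; norm_num
  have h5 : exp (-R) * (4 * exp (C + B)) ≤ exp (-R) * exp R := by gcongr
  have h2 : exp (-R) * exp R = 1 := by rw [← exp_add]; simp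
  have h6 : exp (-R) * ((∫ x, exp (l * (x - x₀)) * g x) + ∫ x, exp (-l * (x - x₀)) * g x)
      ≤ exp (-R) * (I * exp (C + B) + I * exp (C + B)) := by gcongr
  nlinarith

end Nice

/-! ### Two-sided bounds and flatness near the mean -/

namespace Nice

/-- The matching lower bound near the mean, from the sup bound and midpoint semi-log-convexity at the
point provided by `exists_large`. -/
lemma exists_lower {κ : ℝ} (hκ : 0 < κ) (C A B : ℝ) :
    ∃ c : ℝ, 0 < c ∧ ∀ (n : ℕ) (β : ℝ) (g : ℝ → ℝ), 1 ≤ n → β ≤ B → Nice κ C A n β g →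
      ∀ x, |x - n * A| ≤ (1 + |A|) * √n → c * (∫ y, g y) ≤ g x * √n := by
  set R : ℝ := max 1 (log (4 * exp (C + B))) with hR
  have hR1 : 1 ≤ R := le_max_left _ _
  have hRB : 4 * exp (C + B) ≤ exp R := by
    rw [← log_le_iff_le_exp (by positivity)]; exact le_max_right _ _
  have hR0 : 0 < R := by linarith
  have hk : 0 < √κ := sqrt_pos.2 hκ
  refine ⟨exp (-κ * (R + (1 + |A|)) ^ 2) / ((8 * R) ^ 2 * √κ), by positivity, ?_⟩
  intro n β g hn hβ h x hx
  have hn' : (1 : ℝ) ≤ n := by exact_mod_cast hn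
  have hs0 : 0 < √(n : ℝ) := sqrt_pos.2 (by linarith)
  have hss : √(n : ℝ) ^ 2 = n := sq_sqrt (by linarith)
  obtain ⟨z, hz, hgz⟩ := exists_large hR1 hRB hn h hβ
  set I := ∫ y, g y with hI
  have hIpos : 0 < I := h.toReg.integral_pos
  have h1 := h.semi z (x - z)
  have e1 : z + (x - z) = x := by ring
  rw [e1] at h1
  have h2 := h.le_sup hκ hn (z - (x - z))
  have hxz : |x - z| ≤ (R + (1 + |A|)) * √n := by
    have := abs_sub_le x (n * A) z
    rw [abs_sub_comm (n * A : ℝ) z] at this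
    linarith
  have h3 : exp (-κ * (R + (1 + |A|)) ^ 2) ≤ exp (-(κ / n) * (x - z) ^ 2) := by
    apply exp_le_exp.2
    have : (x - z) ^ 2 ≤ (R + (1 + |A|)) ^ 2 * n := by
      rw [← sq_abs, ← hss, ← mul_pow]
      exact pow_le_pow_left₀ (abs_nonneg _) hxz 2
    have h4 : κ / n * (x - z) ^ 2 ≤ κ / n * ((R + (1 + |A|)) ^ 2 * n) := by gcongr
    have h5 : κ / n * ((R + (1 + |A|)) ^ 2 * n) = κ * (R + (1 + |A|)) ^ 2 := by field_simp
    linarith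
  set E := exp (-κ * (R + (1 + |A|)) ^ 2) with hE
  have hE0 : 0 < E := exp_pos _
  have hgx := h.pos x
  have hgz0 := h.pos z
  -- `I² E ≤ (8 R)² (g z √n)² E ≤ (8 R)² (g x √n) (√κ I)`
  have h6 : I ^ 2 * E ≤ (8 * R) ^ 2 * ((g x * √n) * (√κ * I)) := by
    calc I ^ 2 * E ≤ (8 * R * (g z * √n)) ^ 2 * E := by gcongr
      _ = (8 * R) ^ 2 * √n ^ 2 * (g z ^ 2 * E) := by ring
      _ ≤ (8 * R) ^ 2 * √n ^ 2 * (g z ^ 2 * exp (-(κ / n) * (x - z) ^ 2)) := by gcongr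
      _ ≤ (8 * R) ^ 2 * √n ^ 2 * (g x * g (z - (x - z))) := by gcongr
      _ = (8 * R) ^ 2 * ((g x * √n) * (g (z - (x - z)) * √n)) := by ring
      _ ≤ _ := by gcongr
  rw [div_mul_eq_mul_div, div_le_iff₀ (by positivity)]
  nlinarith

/-- Increments of `log g` per step `t` decrease by at most `κ t² / n`, so that a positive increment
persists over many steps. -/
lemma log_step {κ C A β : ℝ} {n : ℕ} {g : ℝ → ℝ} (hκ : 0 < κ) (h : Nice κ C A n β g) (x t : ℝ) (k : ℕ) :
    k * (log (g (x + t)) - log (g x)) - κ / n * t ^ 2 * k ^ 2 / 2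
      ≤ log (g (x + k * t)) - log (g x) := by
  have mid : ∀ y, 2 * log (g y) - κ / n * t ^ 2 ≤ log (g (y + t)) + log (g (y - t)) := by
    intro y
    have h1 := h.semi y t
    have h2 := h.pos y
    have := log_le_log (by positivity) h1
    rw [log_mul (by positivity) (exp_pos _).ne', log_exp, log_pow,
      log_mul (h.pos _).ne' (h.pos _).ne'] at this
    push_cast at this
    linarith
  have inc : ∀ k : ℕ, (log (g (x + t)) - log (g x)) - κ / n * t ^ 2 * k
      ≤ log (g (x + (k + 1 : ℕ) * t)) - log (g (x + k * t)) := by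
    intro k
    induction k with
    | zero => simp
    | succ k ih =>
      have h1 := mid (x + (k + 1 : ℕ) * t)
      have e1 : x + (k + 1 : ℕ) * t + t = x + (k + 1 + 1 : ℕ) * t := by push_cast; ring
      have e2 : x + (k + 1 : ℕ) * t - t = x + k * t := by push_cast; ring
      rw [e1, e2] at h1
      push_cast at *
      linarith
  have hq : 0 ≤ κ / n * t ^ 2 := by positivity
  have main : ∀ k : ℕ, k * (log (g (x + t)) - log (g x)) - κ / n * t ^ 2 * (k * (k - 1)) / 2
      ≤ log (g (x + k * t)) - log (g x) := by
    intro k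
    induction k with
    | zero => simp
    | succ k ih =>
      have := inc k
      push_cast at *
      linarith
  have := main k
  nlinarith [mul_nonneg hq (Nat.cast_nonneg (α := ℝ) k)]

/-- Flatness near the mean: `log g` increases by at most `O(n^{-1/2})` over bounded distances, starting
from a point where `g` satisfies the lower bound of order `n^{-1/2}`. Otherwise a
large increment, repeated about `√n` times, would contradict the two-sided bounds. -/
lemma log_flat {κ C A β c : ℝ} {n : ℕ} {g : ℝ → ℝ} (hκ : 0 < κ) (hn : 1 ≤ n)
    (h : Nice κ C A n β g) (hc : 0 < c) (x t : ℝ) (hx : c * (∫ y, g y) ≤ g x * √n) :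
    log (g (x + t)) - log (g x) ≤ (|log (√κ / c)| + κ * t ^ 2) / √n := by
  have hn' : (1 : ℝ) ≤ n := by exact_mod_cast hn
  have hs1 : 1 ≤ √(n : ℝ) := by rw [one_le_sqrt]; exact hn'
  have hs0 : 0 < √(n : ℝ) := by linarith
  have hss : √(n : ℝ) * √n = n := mul_self_sqrt (by linarith)
  have hIpos : 0 < ∫ y, g y := h.toReg.integral_pos
  have hk : 0 < √κ := sqrt_pos.2 hκ
  set k := ⌈√(n : ℝ)⌉₊ with hkdef
  have k1 : √(n : ℝ) ≤ k := Nat.le_ceil _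
  have k2 : (k : ℝ) ≤ 2 * √n := by have := Nat.ceil_lt_add_one hs0.le; linarith
  have kpos : (0 : ℝ) < k := by linarith
  have h1 := h.log_step hκ x t k
  have h2 := h.le_sup hκ hn (x + k * t)
  have h3 : log (g (x + k * t)) - log (g x) ≤ |log (√κ / c)| := by
    refine le_trans ?_ (le_abs_self _)
    rw [← log_div (h.pos _).ne' (h.pos _).ne']
    have := h.pos x
    have := h.pos (x + k * t)
    apply log_le_log (by positivity)
    rw [div_le_div_iff₀ (by positivity) hc]
    have : c * (g (x + k * t) * √n) ≤ √κ * (g x * √n) := by nlinarith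
    have : √n * (g (x + k * t) * c) ≤ √n * (√κ * g x) := by linarith
    exact le_of_mul_le_mul_left this hs0
  set d := log (g (x + t)) - log (g x) with hd
  set L := |log (√κ / c)| with hL
  have hL0 : 0 ≤ L := abs_nonneg _
  have h4 : k * d ≤ L + κ / n * t ^ 2 * k ^ 2 / 2 := by linarith
  have h5 : d ≤ L / k + κ / n * t ^ 2 * k / 2 := by
    have : L / k + κ / n * t ^ 2 * k / 2 = (L + κ / n * t ^ 2 * k ^ 2 / 2) / k := by field_simp
    rw [this, le_div_iff₀ kpos]; linarith
  have h6 : L / k ≤ L / √n := by gcongr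
  have h7 : κ / n * t ^ 2 * k / 2 ≤ κ * t ^ 2 / √n := by
    calc κ / n * t ^ 2 * k / 2 ≤ κ / n * t ^ 2 * (2 * √n) / 2 := by gcongr
      _ = κ * t ^ 2 / √n := by
        have : κ / n = κ / (√n * √n) := by rw [hss]
        rw [this]; field_simp
  rw [add_div]; linarith

end Nice

/-! ### Exchanging the factors of a long convolution one at a time -/

/-- The convolution `a 0 ∗ a 1 ∗ ⋯ ∗ a n`. -/
def ch (a : ℕ → ℝ → ℝ) : ℕ → ℝ → ℝ
  | 0 => a 0
  | n + 1 => cv (ch a n) (a (n + 1))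

lemma ch_congr {a b : ℕ → ℝ → ℝ} {n : ℕ} (h : ∀ i ≤ n, a i = b i) : ch a n = ch b n := by
  induction n with
  | zero => exact h 0 le_rfl
  | succ n ih => rw [ch, ch, ih fun i hi => h i (by omega), h (n + 1) le_rfl]

lemma ch_reg {a : ℕ → ℝ → ℝ} (ha : ∀ i, Reg (a i)) (n : ℕ) : Reg (ch a n) := by
  induction n with
  | zero => exact ha 0
  | succ n ih => exact ih.cv (ha _)

lemma ch_exp (s : ℝ) (a : ℕ → ℝ → ℝ) (n : ℕ) (x : ℝ) :
    ch (fun i y => exp (s * y) * a i y) n x = exp (s * x) * ch a n x := by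
  induction n generalizing x with
  | zero => rfl
  | succ n ih =>
    have : ch (fun i y => exp (s * y) * a i y) n = fun x => exp (s * x) * ch a n x := funext ih
    rw [ch, this, ch, exp_cv]

lemma ch_nice {κ C A : ℝ} {a : ℕ → ℝ → ℝ} {β : ℕ → ℝ} (ha : ∀ i, Nice κ C A 1 (β i) (a i)) (n : ℕ) :
    Nice κ C A (n + 1) (∑ i ∈ Finset.range (n + 1), β i) (ch a n) := by
  induction n with
  | zero => simpa [ch] using ha 0
  | succ n ih =>
    rw [Finset.sum_range_succ]
    exact ih.cv (by omega) le_rfl (ha _)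

/-- Any single factor of a convolution can be brought to the front; the convolution `g` of the
remaining `n` factors does not depend on it. -/
lemma ch_update {κ C A : ℝ} {a : ℕ → ℝ → ℝ} {β : ℕ → ℝ} (hβ : ∀ i, 0 ≤ β i)
    (ha : ∀ i, Nice κ C A 1 (β i) (a i)) (n k : ℕ) (hn : 1 ≤ n) (hk : k ≤ n) :
    ∃ g, Nice κ C A n (∑ i ∈ Finset.range (n + 1), β i) g ∧
      ∀ q, Reg q → ch (Function.update a k q) n = cv q g := by
  have last : ∀ n, ∃ g, Nice κ C A (n + 1) (∑ i ∈ Finset.range (n + 1 + 1), β i) g ∧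
      ∀ q, Reg q → ch (Function.update a (n + 1) q) (n + 1) = cv q g := by
    intro n
    refine ⟨ch a n, (ch_nice ha n).mono ?_, fun q hq => ?_⟩
    · rw [Finset.sum_range_succ _ (n + 1)]; have := hβ (n + 1); linarith
    · rw [ch, Function.update_self, cv_comm]
      congr 1
      refine ch_congr fun i hi => ?_
      rw [Function.update_of_ne (by omega)]
  induction n with
  | zero => omega
  | succ n ih =>
    rcases Nat.eq_or_lt_of_le hk with rfl | hk'
    · exact last n
    rcases Nat.eq_zero_or_pos n with rfl | hn0
    · obtain rfl : k = 0 := by omega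
      refine ⟨a 1, (ha 1).mono ?_, fun q hq => ?_⟩
      · simp [Finset.sum_range_succ, hβ 0]
      · simp [ch]
    · obtain ⟨g, hg, hgq⟩ := ih hn0 (by omega)
      refine ⟨cv g (a (n + 1)), ?_, fun q hq => ?_⟩
      · rw [Finset.sum_range_succ]
        exact hg.cv hn0 le_rfl (ha _)
      · rw [ch, hgq q hq, Function.update_of_ne (by omega),
          Reg.cv_assoc hq hg.toReg (ha _).toReg]

/-- Seen from a single factor, the convolution of the others is asymptotically constant. -/
lemma cv_ratio_limit {κ C A B : ℝ} (hκ : 0 < κ) {g : ℕ → ℝ → ℝ} {q : ℝ → ℝ} (hq : Reg q)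
    (hg : ∀ᶠ n : ℕ in atTop, Nice κ C A n B (g n)) :
    Tendsto (fun n : ℕ => cv q (g n) ((n + 1) * A) / g n ((n + 1) * A)) atTop
      (nhds (∫ y, q y)) := by
  obtain ⟨c, hc, hlow⟩ := Nice.exists_lower hκ C A B
  have hk : 0 < √κ := sqrt_pos.2 hκ
  have hsq : Tendsto (fun n : ℕ => √(n : ℝ)) atTop atTop :=
    tendsto_sqrt_atTop.comp tendsto_natCast_atTop_atTop
  have low : ∀ y : ℝ, ∀ᶠ n : ℕ in atTop,
      c * (∫ z, g n z) ≤ g n ((n + 1) * A - y) * √n := by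
    intro y
    filter_upwards [hg, eventually_ge_atTop 1, hsq.eventually_ge_atTop (1 + |y|)] with n h hn hy
    refine hlow n B _ hn le_rfl h _ ?_
    have e : ((n : ℝ) + 1) * A - y - n * A = A - y := by ring
    rw [e]
    have := abs_sub A y
    nlinarith [abs_nonneg A, abs_nonneg y]
  have lim : ∀ y : ℝ, Tendsto (fun n : ℕ => g n ((n + 1) * A - y) / g n ((n + 1) * A)) atTop
      (nhds 1) := by
    intro y
    have hlog : Tendsto (fun n : ℕ => log (g n ((n + 1) * A - y)) - log (g n ((n + 1) * A))) atTop
        (nhds 0) := by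
      have hz : Tendsto (fun n : ℕ => (|log (√κ / c)| + κ * y ^ 2) / √n) atTop (nhds 0) :=
        hsq.const_div_atTop _
      refine squeeze_zero_norm' ?_ hz
      filter_upwards [hg, eventually_ge_atTop 1, low y, low 0] with n h hn h1 h2
      rw [sub_zero] at h2
      have f1 := h.log_flat hκ hn hc _ (-y) h2
      have f2 := h.log_flat hκ hn hc _ y h1
      rw [sub_add_cancel] at f2
      rw [← sub_eq_add_neg, neg_sq] at f1
      rw [Real.norm_eq_abs, abs_le]
      constructor <;> linarith
    have hexp := (continuous_exp.tendsto 0).comp hlog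
    rw [exp_zero] at hexp
    refine hexp.congr' ?_
    filter_upwards [hg] with n h
    simp only [Function.comp]
    rw [exp_sub, exp_log (h.pos _), exp_log (h.pos _)]
  have main : Tendsto (fun n : ℕ => ∫ y, q y * (g n ((n + 1) * A - y) / g n ((n + 1) * A))) atTop
      (nhds (∫ y, q y)) := by
    refine tendsto_integral_filter_of_dominated_convergence (fun y => q y * (√κ / c)) ?_ ?_
      (hq.integrable.mul_const _) ?_
    · filter_upwards [hg] with n h
      have := h.cont
      have := hq.cont
      exact Continuous.aestronglyMeasurable (by fun_prop)
    · filter_upwards [hg, eventually_ge_atTop 1, low 0] with n h hn h2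
      refine ae_of_all _ fun y => ?_
      rw [sub_zero] at h2
      have h0 := h.pos ((n + 1) * A - y)
      have h1 := h.pos ((n + 1) * A)
      have hq0 := hq.pos y
      rw [Real.norm_eq_abs, abs_of_pos (by positivity)]
      refine mul_le_mul_of_nonneg_left ?_ hq0.le
      rw [div_le_div_iff₀ h1 hc]
      have h3 := h.le_sup hκ hn ((n + 1) * A - y)
      have hs0 : 0 < √(n : ℝ) := sqrt_pos.2 (by exact_mod_cast hn)
      have : √n * (g n ((n + 1) * A - y) * c) ≤ √n * (√κ * g n ((n + 1) * A)) := by nlinarith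
      exact le_of_mul_le_mul_left this hs0
    · refine ae_of_all _ fun y => ?_
      simpa using (lim y).const_mul (q y)
  refine main.congr fun n => ?_
  rw [cv, ← integral_div]
  refine integral_congr_ae (ae_of_all _ fun y => ?_)
  simp only [mul_div_assoc]

/-- Replacing one factor `p` of a convolution by `q` raises the logarithm, at a point `x` where the
lower bound of order `n^{-1/2}` holds, by at most a constant times the `L¹` distance, uniformly in the number of factors. -/
lemma log_cv_sub_le {κ C A B c m d : ℝ} (hκ : 0 < κ) (hc : 0 < c) (hm : 0 < m) {n : ℕ} (hn : 1 ≤ n)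
    {g p q : ℝ → ℝ} {x : ℝ} (hg : Nice κ C A n B g) (hp : Reg p) (hq : Reg q) (hmp : m ≤ ∫ y, p y)
    (hlow : c * (∫ y, cv p g y) ≤ cv p g x * √((n + 1 : ℕ) : ℝ))
    (hd : ∫ y, |q y - p y| ≤ d) :
    log (cv q g x) - log (cv p g x) ≤ 2 * √κ / (c * m) * d := by
  have hk : 0 < √κ := sqrt_pos.2 hκ
  have hn' : (1 : ℝ) ≤ n := by exact_mod_cast hn
  have hs0 : 0 < √(n : ℝ) := sqrt_pos.2 (by linarith)
  have hs2 : √((n + 1 : ℕ) : ℝ) ≤ 2 * √n := by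
    rw [sqrt_le_left (by positivity), mul_pow, sq_sqrt (by linarith)]
    push_cast; linarith
  have hP := (hp.cv hg.toReg).pos x
  have hQ := (hq.cv hg.toReg).pos x
  rw [hp.integral_cv hg.toReg] at hlow
  set I := ∫ y, g y with hI
  have hIpos : 0 < I := hg.toReg.integral_pos
  have hd0 : 0 ≤ d := le_trans (integral_nonneg fun y => abs_nonneg _) hd
  have hdiff : (cv q g x - cv p g x) * √n ≤ d * (√κ * I) := by
    have i1 := Reg.integrable_mul hq.integrable hg.toReg x
    have i2 := Reg.integrable_mul hp.integrable hg.toReg x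
    have i3 : Integrable fun y => |q y - p y| := (hq.integrable.sub hp.integrable).abs
    have e : (cv q g x - cv p g x) * √n
        = ∫ y, (q y * g (x - y) - p y * g (x - y)) * √n := by
      rw [integral_mul_const, integral_sub i1 i2]; rfl
    rw [e]
    calc _ ≤ ∫ y, |q y - p y| * (√κ * I) := by
          refine integral_mono ((i1.sub i2).mul_const _) (i3.mul_const _) fun y => ?_
          have h1 := hg.le_sup hκ hn (x - y)
          have h2 := hg.pos (x - y)
          calc (q y * g (x - y) - p y * g (x - y)) * √n
              = (q y - p y) * (g (x - y) * √n) := by ring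
            _ ≤ |q y - p y| * (g (x - y) * √n) := by gcongr; exact le_abs_self _
            _ ≤ _ := by gcongr
      _ = (∫ y, |q y - p y|) * (√κ * I) := integral_mul_const _ _
      _ ≤ _ := by gcongr
  have hlow' : c * m * I ≤ cv p g x * (2 * √n) := by
    calc c * m * I = c * (m * I) := by ring
      _ ≤ c * ((∫ y, p y) * I) := by gcongr
      _ ≤ _ := hlow
      _ ≤ _ := by gcongr
  rw [← log_div hQ.ne' hP.ne']
  refine (log_le_sub_one_of_pos (by positivity)).trans ?_
  have : cv q g x / cv p g x - 1 = (cv q g x - cv p g x) / cv p g x := by field_simp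
  rw [this, div_le_iff₀ hP, div_mul_eq_mul_div, div_mul_eq_mul_div, le_div_iff₀ (by positivity)]
  have h3 : I * √n * ((cv q g x - cv p g x) * (c * m)) ≤
      I * √n * (2 * √κ * d * cv p g x) := by
    calc I * √n * ((cv q g x - cv p g x) * (c * m))
        = ((cv q g x - cv p g x) * √n) * (c * m * I) := by ring
      _ ≤ (d * (√κ * I)) * (c * m * I) := by gcongr
      _ ≤ (d * (√κ * I)) * (cv p g x * (2 * √n)) := by gcongr
      _ = _ := by ring
  exact le_of_mul_le_mul_left h3 (by positivity)

/-- If the factors `q k` are summably close to `p`, the ratio of the two long convolutions at the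
mean converges to the infinite product of the ratios of the total masses. -/
theorem tendsto_log_ch {κ C A m : ℝ} (hκ : 0 < κ) (hm : 0 < m) {p : ℝ → ℝ} {q : ℕ → ℝ → ℝ}
    {β b : ℕ → ℝ} (hp : Nice κ C A 1 0 p) (hq : ∀ k, Nice κ C A 1 (β k) (q k))
    (hβ0 : ∀ k, 0 ≤ β k) (hβ : Summable β) (hb : ∀ k, ∫ y, |q k y - p y| ≤ b k) (hbs : Summable b)
    (hmp : m ≤ ∫ y, p y) (hmq : ∀ k, m ≤ ∫ y, q k y) :
    Tendsto (fun n : ℕ => log (ch q n ((n + 1) * A)) - log (ch (fun _ => p) n ((n + 1) * A))) atTop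
      (nhds (∑' k, (log (∫ y, q k y) - log (∫ y, p y)))) := by
  have hp' : ∀ k, Nice κ C A 1 (β k) p := fun k => hp.mono (hβ0 k)
  set B : ℝ := ∑' k, β k with hB
  have hsum : ∀ n, ∑ i ∈ Finset.range n, β i ≤ B := fun n => hβ.sum_le_tsum _ fun i _ => hβ0 i
  -- `mix k` has its first `k` factors exchanged
  let mix : ℕ → ℕ → ℝ → ℝ := fun k i => if i < k then q i else p
  have hmix : ∀ k i, Nice κ C A 1 (β i) (mix k i) := by
    intro k i
    by_cases hik : i < k
    · simpa [mix, hik] using hq i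
    · simpa [mix, hik] using hp' i
  have mix_p : ∀ k, Function.update (mix k) k p = mix k := fun k => by
    simp [mix]
  have mix_q : ∀ k, Function.update (mix k) k (q k) = mix (k + 1) := fun k => by
    funext i
    by_cases hik : i = k
    · subst hik; simp [mix]
    · rw [Function.update_of_ne hik]
      have : i < k ↔ i < k + 1 := by omega
      simp [mix, this]
  have hex : ∀ k n : ℕ, ∃ g, 1 ≤ n → k ≤ n → Nice κ C A n B g ∧ ch (mix k) n = cv p g ∧
      ch (mix (k + 1)) n = cv (q k) g := by
    intro k n
    by_cases hkn : 1 ≤ n ∧ k ≤ n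
    · obtain ⟨g, hg, hgq⟩ := ch_update hβ0 (hmix k) n k hkn.1 hkn.2
      refine ⟨g, fun _ _ => ⟨hg.mono (hsum _), ?_, ?_⟩⟩
      · rw [← hgq p hp.toReg, mix_p]
      · rw [← hgq _ (hq k).toReg, mix_q]
    · exact ⟨p, fun h1 h2 => absurd ⟨h1, h2⟩ hkn⟩
  choose g hg using hex
  obtain ⟨c, hc, hlow⟩ := Nice.exists_lower hκ C A B
  -- `F n k` is the effect of exchanging the factor `k` of `n + 1`; the sum over `k` telescopes
  let F : ℕ → ℕ → ℝ := fun n k => if k ≤ n then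
    log (ch (mix (k + 1)) n ((n + 1) * A)) - log (ch (mix k) n ((n + 1) * A)) else 0
  have hF : ∀ n, ∑' k, F n k =
      log (ch q n ((n + 1) * A)) - log (ch (fun _ => p) n ((n + 1) * A)) := by
    intro n
    rw [tsum_eq_sum (s := Finset.range (n + 1))]
    · have : ∀ k ∈ Finset.range (n + 1), F n k =
          log (ch (mix (k + 1)) n ((n + 1) * A)) - log (ch (mix k) n ((n + 1) * A)) := by
        intro k hk
        rw [Finset.mem_range] at hk
        simp only [F]
        rw [if_pos (by omega)]
      rw [Finset.sum_congr rfl this,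
        Finset.sum_range_sub (fun k => log (ch (mix k) n ((n + 1) * A)))]
      have e1 : ch (mix (n + 1)) n = ch q n := ch_congr fun i hi => by
        simp [mix, Nat.lt_succ_of_le hi]
      have e2 : mix 0 = fun _ => p := by funext i; simp [mix]
      rw [e1, e2]
    · intro k hk
      rw [Finset.mem_range] at hk
      simp only [F]
      rw [if_neg (by omega)]
  have hlowmix : ∀ k n, c * (∫ y, ch (mix k) n y)
      ≤ ch (mix k) n ((n + 1) * A) * √((n + 1 : ℕ) : ℝ) := by
    intro k n
    refine hlow (n + 1) _ _ (by omega) (hsum _) (ch_nice (hmix k) n) _ ?_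
    push_cast
    rw [sub_self, abs_zero]
    positivity
  have key := tendsto_tsum_of_dominated_convergence (𝓕 := atTop) (f := F)
    (g := fun k => log (∫ y, q k y) - log (∫ y, p y))
    (bound := fun k => 2 * √κ / (c * m) * b k) (hbs.mul_left _) ?_ ?_
  · simpa only [hF] using key
  · intro k
    have hnice : ∀ᶠ n : ℕ in atTop, Nice κ C A n B (g k n) := by
      filter_upwards [eventually_ge_atTop 1, eventually_ge_atTop k] with n h1 h2
      exact (hg k n h1 h2).1
    have l1 := (cv_ratio_limit hκ (hq k).toReg hnice).log (hq k).toReg.integral_pos.ne'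
    have l2 := (cv_ratio_limit hκ hp.toReg hnice).log hp.toReg.integral_pos.ne'
    refine (l1.sub l2).congr' ?_
    filter_upwards [eventually_ge_atTop 1, eventually_ge_atTop k] with n h1 h2
    obtain ⟨h3, h4, h5⟩ := hg k n h1 h2
    simp only [F]
    rw [if_pos h2, h4, h5, log_div, log_div]
    · ring
    · exact ((hp.toReg.cv h3.toReg).pos _).ne'
    · exact (h3.pos _).ne'
    · exact (((hq k).toReg.cv h3.toReg).pos _).ne'
    · exact (h3.pos _).ne'
  · filter_upwards [eventually_ge_atTop 1] with n hn k
    simp only [F]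
    have hbk : 0 ≤ b k := le_trans (integral_nonneg fun y => abs_nonneg _) (hb k)
    split_ifs with hkn
    · obtain ⟨h3, h4, h5⟩ := hg k n hn hkn
      have w1 := hlowmix k n
      have w2 := hlowmix (k + 1) n
      rw [h4] at w1 ⊢
      rw [h5] at w2 ⊢
      rw [Real.norm_eq_abs, abs_le]
      constructor
      · have hb' : ∫ y, |p y - q k y| ≤ b k := by
          simpa only [abs_sub_comm] using hb k
        have := log_cv_sub_le hκ hc hm hn h3 (hq k).toReg hp.toReg (hmq k) w2 hb'
        linarith
      · exact log_cv_sub_le hκ hc hm hn h3 hp.toReg (hq k).toReg hmp w1 (hb k)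
    · rw [norm_zero]; positivity

/-! ### The partition function of the chain as a convolution -/

lemma continuous_bc (n i : ℕ) :
    Continuous fun z : ℝ × (Fin n → ℝ) => bc (n + 1) z.1 z.2 i := by
  unfold bc
  by_cases h1 : 0 < i ∧ i < n + 1
  · simp only [h1, and_self, dite_true]
    exact (continuous_apply _).comp continuous_snd
  · simp only [h1, dite_false]
    by_cases h2 : i = 0
    · simp only [h2, if_true]; exact continuous_const
    · simp only [h2, if_false]; exact continuous_fst

/-- Fixing the position `y` of the last free atom leaves a chain that is shorter by one bond. -/
lemma bc_insertNth (n : ℕ) (b y : ℝ) (v : Fin n → ℝ) (i : ℕ) (hi : i ≤ n + 1) :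
    bc (n + 2) b ((Fin.last n).insertNth (α := fun _ => ℝ) y v) i = bc (n + 1) y v i := by
  rw [Fin.insertNth_last']
  unfold bc
  rcases Nat.eq_zero_or_pos i with rfl | h0
  · simp
  · rw [dif_pos ⟨h0, by omega⟩]
    rcases Nat.eq_or_lt_of_le hi with rfl | h1
    · have : (⟨n + 1 - 1, by omega⟩ : Fin (n + 1)) = Fin.last n := rfl
      simp
      exact Fin.snoc_last (α := fun _ => ℝ) y v
    · rw [dif_pos ⟨h0, h1⟩]
      exact Fin.snoc_castSucc (α := fun _ => ℝ) y v ⟨i - 1, by omega⟩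

/-- The Boltzmann weights of the bonds, the defect energy `D` being attached to the first one. -/
def bond (φ : ℕ → ℝ → ℝ) (D : ℝ → ℝ) (i : ℕ) (y : ℝ) : ℝ :=
  if i = 0 then exp (-φ 1 y - D y) else exp (-φ (i + 1) y)

/-- Integrating out the interior atoms from the right gives an iterated convolution, evaluated at the
position `b` of the clamped end. -/
lemma chain_integral {φ : ℕ → ℝ → ℝ} {D : ℝ → ℝ} (hφ : ∀ i, Continuous (φ i)) (hD : Continuous D)
    (hreg : ∀ i, Reg (bond φ D i)) (n : ℕ) (b : ℝ) :
    Integrable (fun u : Fin n → ℝ => exp (-(chainE φ (n + 1) b u) - D (bc (n + 1) b u 1))) ∧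
    ∫ u : Fin n → ℝ, exp (-(chainE φ (n + 1) b u) - D (bc (n + 1) b u 1))
      = ch (bond φ D) n b := by
  induction n generalizing b with
  | zero =>
    have hv : (volume : Measure (Fin 0 → ℝ)) = Measure.dirac (fun a => isEmptyElim a) :=
      Measure.volume_pi_eq_dirac _
    constructor
    · rw [hv]; exact integrable_dirac (by simp)
    · rw [hv, integral_dirac]
      simp [ch, bond, chainE, bc]
  | succ n ih =>
    have hmp := (volume_preserving_piFinSuccAbove (fun _ : Fin (n + 1) => ℝ) (Fin.last n)).symm
    have hme := (MeasurableEquiv.piFinSuccAbove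
      (fun _ : Fin (n + 1) => ℝ) (Fin.last n)).symm.measurableEmbedding
    have hF : ∀ z : ℝ × (Fin n → ℝ),
        exp (-(chainE φ (n + 1 + 1) b ((MeasurableEquiv.piFinSuccAbove
          (fun _ : Fin (n + 1) => ℝ) (Fin.last n)).symm z)) - D (bc (n + 1 + 1) b
          ((MeasurableEquiv.piFinSuccAbove (fun _ : Fin (n + 1) => ℝ) (Fin.last n)).symm z) 1))
        = exp (-(chainE φ (n + 1) z.1 z.2) - D (bc (n + 1) z.1 z.2 1)) *
          bond φ D (n + 1) (b - z.1) := by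
      rintro ⟨y, v⟩
      have e0 : (MeasurableEquiv.piFinSuccAbove
          (fun _ : Fin (n + 1) => ℝ) (Fin.last n)).symm (y, v)
          = (Fin.last n).insertNth (α := fun _ => ℝ) y v := rfl
      rw [e0, bc_insertNth n b y v 1 (by omega)]
      have e1 : chainE φ (n + 1 + 1) b ((Fin.last n).insertNth (α := fun _ => ℝ) y v)
          = chainE φ (n + 1) y v + φ (n + 2) (b - y) := by
        unfold chainE
        rw [Finset.sum_range_succ]
        congr 1
        · refine Finset.sum_congr rfl fun i hi => ?_
          rw [Finset.mem_range] at hi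
          rw [bc_insertNth n b y v i (by omega), bc_insertNth n b y v (i + 1) (by omega)]
        · rw [bc_insertNth n b y v (n + 1) le_rfl]
          simp [bc]
      rw [e1, bond, if_neg (by omega), ← exp_add]
      congr 1; ring
    have hcont : Continuous fun z : ℝ × (Fin n → ℝ) =>
        exp (-(chainE φ (n + 1) z.1 z.2) - D (bc (n + 1) z.1 z.2 1)) *
          bond φ D (n + 1) (b - z.1) := by
      have h1 : Continuous fun z : ℝ × (Fin n → ℝ) => chainE φ (n + 1) z.1 z.2 :=
        continuous_finsetSum _ fun i _ =>
          (hφ _).comp ((continuous_bc n (i + 1)).sub (continuous_bc n i))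
      have h2 := hD.comp (continuous_bc n 1)
      have h3 := (hreg (n + 1)).cont
      exact (continuous_exp.comp (h1.neg.sub h2)).mul (h3.comp (continuous_const.sub continuous_fst))
    have hint : Integrable (fun z : ℝ × (Fin n → ℝ) =>
        exp (-(chainE φ (n + 1) z.1 z.2) - D (bc (n + 1) z.1 z.2 1)) *
          bond φ D (n + 1) (b - z.1)) (volume.prod volume) := by
      rw [integrable_prod_iff hcont.aestronglyMeasurable]
      refine ⟨ae_of_all _ fun y => (ih y).1.mul_const (bond φ D (n + 1) (b - y)), ?_⟩
      have : ∀ y : ℝ, ∫ v : Fin n → ℝ, ‖exp (-(chainE φ (n + 1) y v) - D (bc (n + 1) y v 1)) *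
          bond φ D (n + 1) (b - y)‖ = ch (bond φ D) n y * bond φ D (n + 1) (b - y) := by
        intro y
        rw [← (ih y).2, ← integral_mul_const]
        refine integral_congr_ae (ae_of_all _ fun v => ?_)
        simp only
        rw [Real.norm_eq_abs, abs_of_pos (mul_pos (exp_pos _) ((hreg _).pos _))]
      simp only [this]
      exact Reg.integrable_mul (ch_reg hreg n).integrable (hreg _) b
    constructor
    · rw [← hmp.integrable_comp_emb hme]
      refine Integrable.congr hint (ae_of_all _ fun z => ?_)
      exact (hF z).symm
    · rw [← hmp.integral_comp hme]
      simp only [hF]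
      rw [Measure.volume_eq_prod, integral_prod _ hint, ch, cv]
      refine integral_congr_ae (ae_of_all _ fun y => ?_)
      simp only
      rw [integral_mul_const, (ih y).2]

/-! ### Uniformly convex potentials -/

lemma midpoint_le {φ : ℝ → ℝ} {κ : ℝ} (hφ : ContDiff ℝ 2 φ) (h : ∀ y, deriv (deriv φ) y ≤ κ)
    (x t : ℝ) : φ (x + t) + φ (x - t) ≤ 2 * φ x + κ * t ^ 2 := by
  have hd : Differentiable ℝ φ := hφ.differentiable (by norm_num)
  have hd' : Differentiable ℝ (deriv φ) :=
    ((contDiff_succ_iff_deriv (n := 1)).1 hφ).2.2.differentiable (by norm_num)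
  have e1 : deriv (fun y => κ / 2 * y ^ 2 - φ y) = fun y => κ * y - deriv φ y := by
    funext y
    have : HasDerivAt (fun y => κ / 2 * y ^ 2 - φ y)
        (κ / 2 * ((2 : ℕ) * y ^ (2 - 1)) - deriv φ y) y :=
      ((hasDerivAt_pow 2 y).const_mul (κ / 2)).sub (hd y).hasDerivAt
    rw [this.deriv]; push_cast; ring
  have e2 : deriv (fun y => κ * y - deriv φ y) = fun y => κ - deriv (deriv φ) y := by
    funext y
    have : HasDerivAt (fun y => κ * y - deriv φ y) (κ * 1 - deriv (deriv φ) y) y :=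
      ((hasDerivAt_id y).const_mul κ).sub (hd' y).hasDerivAt
    rw [this.deriv]; ring
  have hconv : ConvexOn ℝ Set.univ fun y => κ / 2 * y ^ 2 - φ y := by
    refine convexOn_univ_of_deriv2_nonneg (by fun_prop) (by rw [e1]; fun_prop) fun y => ?_
    rw [Function.iterate_succ, Function.iterate_one, Function.comp, e1, e2]
    simpa using h y
  have := hconv.2 (Set.mem_univ (x + t)) (Set.mem_univ (x - t))
    (by norm_num : (0 : ℝ) ≤ 1 / 2) (by norm_num : (0 : ℝ) ≤ 1 / 2) (by norm_num)
  have e : (1 / 2 : ℝ) • (x + t) + (1 / 2 : ℝ) • (x - t) = x := by simp only [smul_eq_mul]; ring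
  rw [e] at this
  simp only [smul_eq_mul] at this
  nlinarith

lemma exists_quadratic_le {φ : ℝ → ℝ} {k : ℝ} (hφ : ContDiff ℝ 2 φ)
    (h : ∀ y, k ≤ deriv (deriv φ) y) :
    ∃ a b : ℝ, ∀ y, a + b * y + k / 2 * y ^ 2 ≤ φ y := by
  have hd : Differentiable ℝ φ := hφ.differentiable (by norm_num)
  have hd' : Differentiable ℝ (deriv φ) :=
    ((contDiff_succ_iff_deriv (n := 1)).1 hφ).2.2.differentiable (by norm_num)
  have hder : ∀ y, HasDerivAt (fun y => φ y - k / 2 * y ^ 2) (deriv φ y - k * y) y := fun y => by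
    have : HasDerivAt (fun y => φ y - k / 2 * y ^ 2)
        (deriv φ y - k / 2 * ((2 : ℕ) * y ^ (2 - 1))) y :=
      (hd y).hasDerivAt.sub ((hasDerivAt_pow 2 y).const_mul (k / 2))
    have e : deriv φ y - k / 2 * ((2 : ℕ) * y ^ (2 - 1)) = deriv φ y - k * y := by
      push_cast; ring
    rwa [e] at this
  have e1 : deriv (fun y => φ y - k / 2 * y ^ 2) = fun y => deriv φ y - k * y :=
    funext fun y => (hder y).deriv
  have e2 : deriv (fun y => deriv φ y - k * y) = fun y => deriv (deriv φ) y - k := by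
    funext y
    have : HasDerivAt (fun y => deriv φ y - k * y) (deriv (deriv φ) y - k * 1) y :=
      (hd' y).hasDerivAt.sub ((hasDerivAt_id y).const_mul k)
    rw [this.deriv]; ring
  have hconv : ConvexOn ℝ Set.univ fun y => φ y - k / 2 * y ^ 2 := by
    refine convexOn_univ_of_deriv2_nonneg (by fun_prop) (by rw [e1]; fun_prop) fun y => ?_
    rw [Function.iterate_succ, Function.iterate_one, Function.comp, e1, e2]
    simpa using h y
  refine ⟨φ 0, deriv φ 0, fun y => ?_⟩
  have h0 := hder 0
  rcases lt_trichotomy y 0 with hy | rfl | hy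
  · have := hconv.slope_le_of_hasDerivAt (Set.mem_univ y) (Set.mem_univ 0) hy h0
    rw [slope_def_field, div_le_iff₀ (by linarith)] at this
    nlinarith
  · simp
  · have := hconv.le_slope_of_hasDerivAt (Set.mem_univ 0) (Set.mem_univ y) hy h0
    rw [slope_def_field, le_div_iff₀ (by linarith)] at this
    nlinarith

lemma reg_exp {φ : ℝ → ℝ} {k : ℝ} (hk : 0 < k) (hφ : ContDiff ℝ 2 φ)
    (h : ∀ y, k ≤ deriv (deriv φ) y) (s : ℝ) : Reg fun y => exp (-φ y + s * y) := by
  obtain ⟨a, b, hab⟩ := exists_quadratic_le hφ h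
  have hc := hφ.continuous
  -- completing the square
  have key : ∀ l y : ℝ, exp (l * y) * exp (-φ y + s * y)
      ≤ exp (-a + (l + s - b) ^ 2 / k) * exp (-(k / 4) * y ^ 2) := by
    intro l y
    rw [← exp_add, ← exp_add]
    apply exp_le_exp.2
    have h1 := hab y
    have h2 : 0 ≤ (k * y / 2 - (l + s - b)) ^ 2 / k := by positivity
    have h3 : (k * y / 2 - (l + s - b)) ^ 2 / k
        = k / 4 * y ^ 2 - (l + s - b) * y + (l + s - b) ^ 2 / k := by field_simp; ring
    linarith
  refine ⟨by fun_prop, fun y => exp_pos _, ⟨exp (-a + (0 + s - b) ^ 2 / k), fun y => ?_⟩,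
    fun l => ?_⟩
  · have := key 0 y
    rw [zero_mul, exp_zero, one_mul] at this
    refine this.trans (mul_le_of_le_one_right (exp_pos _).le ?_)
    rw [exp_le_one_iff]
    have : 0 ≤ k / 4 * y ^ 2 := by positivity
    linarith
  · refine ((integrable_exp_neg_mul_sq (b := k / 4) (by positivity)).const_mul
      (exp (-a + (l + s - b) ^ 2 / k))).mono'
      (Continuous.aestronglyMeasurable (by fun_prop)) (ae_of_all _ fun y => ?_)
    rw [Real.norm_eq_abs, abs_of_pos (by positivity)]
    exact key l y

/-- An upper bound on `φ''` is midpoint semi-log-convexity of `exp (-φ)`; linear tilts are harmless. -/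
lemma semi_exp {φ : ℝ → ℝ} {κ : ℝ} (hφ : ContDiff ℝ 2 φ) (h : ∀ y, deriv (deriv φ) y ≤ κ)
    (s x t : ℝ) : exp (-φ x + s * x) ^ 2 * exp (-κ * t ^ 2)
      ≤ exp (-φ (x + t) + s * (x + t)) * exp (-φ (x - t) + s * (x - t)) := by
  rw [← exp_nat_mul, ← exp_add, ← exp_add]
  apply exp_le_exp.2
  have := midpoint_le hφ h x t
  push_cast
  linarith

/-! ### The cumulant generating function and its Legendre transform -/

/-- The partition function of a single bond under the stress `s`. -/
def Z (ψ : ℝ → ℝ) (s : ℝ) : ℝ := ∫ y, exp (-ψ y + s * y)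

/-- The logarithm of `Z`; `W` is its Legendre transform. -/
def Lam (ψ : ℝ → ℝ) (s : ℝ) : ℝ := log (Z ψ s)

section Legendre

variable {ψ : ℝ → ℝ} {k κ : ℝ}

lemma Z_pos (hk : 0 < k) (hψ : ContDiff ℝ 2 ψ) (h1 : ∀ y, k ≤ deriv (deriv ψ) y) (s : ℝ) :
    0 < Z ψ s := (reg_exp hk hψ h1 s).integral_pos

lemma integral_exp_mul (s l : ℝ) : ∫ y, exp (l * y) * exp (-ψ y + s * y) = Z ψ (s + l) := by
  refine integral_congr_ae (ae_of_all _ fun y => ?_)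
  simp only
  rw [← exp_add]; congr 1; ring

/-- `Lam` is the cumulant generating function of the measure with density `exp (-ψ)`, hence analytic. -/
lemma contDiff_Lam (hk : 0 < k) (hψ : ContDiff ℝ 2 ψ) (h1 : ∀ y, k ≤ deriv (deriv ψ) y) :
    ContDiff ℝ 2 (Lam ψ) := by
  have hc := hψ.continuous
  set μ : Measure ℝ := volume.withDensity fun y => ENNReal.ofReal (exp (-ψ y)) with hμ
  have hm : Measurable fun y => ENNReal.ofReal (exp (-ψ y)) := by fun_prop
  have hset : ProbabilityTheory.integrableExpSet id μ = Set.univ := by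
    ext s
    simp only [ProbabilityTheory.integrableExpSet, Set.mem_ofPred_eq, Set.mem_univ, iff_true]
    rw [hμ, integrable_withDensity_iff_integrable_smul' hm (by simp)]
    refine ((reg_exp hk hψ h1 s).integrable).congr (ae_of_all _ fun y => ?_)
    simp only [id]
    rw [ENNReal.toReal_ofReal (exp_pos _).le, smul_eq_mul, ← exp_add]
  have heq : Lam ψ = ProbabilityTheory.cgf id μ := by
    funext s
    rw [ProbabilityTheory.cgf, ProbabilityTheory.mgf, Lam, Z, hμ,
      integral_withDensity_eq_integral_toReal_smul hm (by simp)]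
    congr 1
    refine integral_congr_ae (ae_of_all _ fun y => ?_)
    simp only [id]
    rw [ENNReal.toReal_ofReal (exp_pos _).le, smul_eq_mul, ← exp_add]
  have han := ProbabilityTheory.analyticOnNhd_cgf (X := id) (μ := μ)
  rw [hset, interior_univ, ← heq] at han
  exact contDiffOn_univ.1 (han.contDiffOn uniqueDiffOn_univ)

/-- Strong midpoint convexity of `Lam`, dual to the upper bound `ψ'' ≤ κ`. -/
lemma Lam_midpoint (hk : 0 < k) (hκ : 0 < κ) (hψ : ContDiff ℝ 2 ψ)
    (h1 : ∀ y, k ≤ deriv (deriv ψ) y) (h2 : ∀ y, deriv (deriv ψ) y ≤ κ) (s t : ℝ) :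
    2 * Lam ψ s + t ^ 2 / κ ≤ Lam ψ (s + t) + Lam ψ (s - t) := by
  -- shift the integration variable by `± d`
  set d := t / κ with hd
  have e1 : Z ψ (s + t) = ∫ y, exp (-ψ (y + d) + (s + t) * (y + d)) :=
    (integral_add_right_eq_self (fun y => exp (-ψ y + (s + t) * y)) d).symm
  have e2 : Z ψ (s - t) = ∫ y, exp (-ψ (y - d) + (s - t) * (y - d)) :=
    (integral_sub_right_eq_self (fun y => exp (-ψ y + (s - t) * y)) d).symm
  have key : Z ψ s ^ 2 * exp (t ^ 2 / κ) ≤ Z ψ (s + t) * Z ψ (s - t) := by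
    have : Z ψ s ^ 2 * exp (t ^ 2 / κ)
        = (∫ y, exp (t ^ 2 / κ / 2) * exp (-ψ y + s * y)) ^ 2 := by
      rw [integral_const_mul, mul_pow, ← exp_nat_mul, Z, mul_comm]
      congr 2; push_cast; ring
    rw [this, e1, e2]
    refine sq_integral_le (fun y => exp_pos _) (fun y => exp_pos _)
      ((reg_exp hk hψ h1 (s + t)).integrable.comp_add_right d)
      ((reg_exp hk hψ h1 (s - t)).integrable.comp_sub_right d) fun y => ?_
    rw [← exp_add, ← exp_add, ← exp_nat_mul]
    apply exp_le_exp.2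
    have := midpoint_le hψ h2 y d
    have e3 : κ * d ^ 2 = t ^ 2 / κ := by rw [hd]; field_simp
    have e4 : t * d = t ^ 2 / κ := by rw [hd]; ring
    push_cast
    linarith
  have hp := Z_pos hk hψ h1
  have := log_le_log (mul_pos (pow_pos (hp s) 2) (exp_pos _)) key
  rw [log_mul (pow_pos (hp s) 2).ne' (exp_pos _).ne', log_exp, log_pow,
    log_mul (hp _).ne' (hp _).ne'] at this
  push_cast at this
  exact this

/-- Strong convexity of `Lam` in tangent form, obtained from the midpoint form by iterated
halving. -/
lemma Lam_tangent (hk : 0 < k) (hκ : 0 < κ) (hψ : ContDiff ℝ 2 ψ)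
    (h1 : ∀ y, k ≤ deriv (deriv ψ) y) (h2 : ∀ y, deriv (deriv ψ) y ≤ κ) (s t : ℝ) :
    Lam ψ s + deriv (Lam ψ) s * t + t ^ 2 / (2 * κ) ≤ Lam ψ (s + t) := by
  set Φ : ℝ → ℝ := fun u => Lam ψ (s + u * t) - (u * t) ^ 2 / (2 * κ) with hΦ
  have half : ∀ u, 2 * (Φ (u / 2) - Φ 0) ≤ Φ u - Φ 0 := by
    intro u
    have := Lam_midpoint hk hκ hψ h1 h2 (s + u / 2 * t) (u / 2 * t)
    have e1 : s + u / 2 * t + u / 2 * t = s + u * t := by ring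
    have e2 : s + u / 2 * t - u / 2 * t = s := by ring
    rw [e1, e2] at this
    have e3 : 2 * ((u / 2 * t) ^ 2 / (2 * κ)) = (u * t) ^ 2 / (2 * κ) - (u / 2 * t) ^ 2 / κ := by
      field_simp; ring
    simp only [hΦ, zero_mul, add_zero]
    norm_num
    linarith
  have iter : ∀ j : ℕ, (2 : ℝ) ^ j * (Φ ((1 / 2) ^ j) - Φ 0) ≤ Φ 1 - Φ 0 := by
    intro j
    induction j with
    | zero => simp
    | succ j ih =>
      refine le_trans ?_ ih
      have := half ((1 / 2) ^ j)
      have e : (1 / 2 : ℝ) ^ j / 2 = (1 / 2) ^ (j + 1) := by rw [pow_succ]; ring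
      rw [e] at this
      calc (2 : ℝ) ^ (j + 1) * (Φ ((1 / 2) ^ (j + 1)) - Φ 0)
          = 2 ^ j * (2 * (Φ ((1 / 2) ^ (j + 1)) - Φ 0)) := by rw [pow_succ]; ring
        _ ≤ _ := by gcongr
  have hdiff := ((contDiff_Lam hk hψ h1).differentiable (by norm_num) s).hasDerivAt
  have hder : HasDerivAt Φ (deriv (Lam ψ) s * t) 0 := by
    have hin : HasDerivAt (fun u : ℝ => s + u * t) t 0 := by
      simpa using ((hasDerivAt_id (0 : ℝ)).mul_const t).const_add s
    have hout : HasDerivAt (Lam ψ) (deriv (Lam ψ) s) (s + 0 * t) := by simpa using hdiff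
    have hq : HasDerivAt (fun u : ℝ => (u * t) ^ 2 / (2 * κ)) 0 0 := by
      have := ((((hasDerivAt_id (0 : ℝ)).mul_const t).pow 2).div_const (2 * κ))
      simpa using this
    have := (hout.comp 0 hin).sub hq
    rw [sub_zero] at this
    exact this
  have hlim := hder.tendsto_slope_zero
  have hseq : Tendsto (fun j : ℕ => (1 / 2 : ℝ) ^ j) atTop (nhdsWithin 0 {0}ᶜ) := by
    rw [tendsto_nhdsWithin_iff]
    refine ⟨tendsto_pow_atTop_nhds_zero_of_lt_one (by norm_num) (by norm_num), ?_⟩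
    exact Eventually.of_forall fun j => by simp
  have h3 := le_of_tendsto' (hlim.comp hseq) fun j => by
    have := iter j
    simpa using this
  simp only [hΦ, one_mul, zero_mul, add_zero] at h3
  norm_num at h3
  linarith

lemma exists_deriv_Lam_eq (hk : 0 < k) (hκ : 0 < κ) (hψ : ContDiff ℝ 2 ψ)
    (h1 : ∀ y, k ≤ deriv (deriv ψ) y) (h2 : ∀ y, deriv (deriv ψ) y ≤ κ) (A : ℝ) :
    ∃ s, deriv (Lam ψ) s = A := by
  have hcont : Continuous (deriv (Lam ψ)) := (contDiff_Lam hk hψ h1).continuous_deriv (by norm_num)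
  have mono : ∀ t, t ^ 2 / κ ≤ (deriv (Lam ψ) t - deriv (Lam ψ) 0) * t := by
    intro t
    have a1 := Lam_tangent hk hκ hψ h1 h2 0 t
    have a2 := Lam_tangent hk hκ hψ h1 h2 t (-t)
    rw [zero_add] at a1
    rw [add_neg_cancel] at a2
    have e : t ^ 2 / κ = 2 * (t ^ 2 / (2 * κ)) := by field_simp
    rw [neg_sq] at a2
    linarith
  set r : ℝ := κ * |A - deriv (Lam ψ) 0| + 1 with hr
  have hr0 : 0 < r := by positivity
  have hrk : |A - deriv (Lam ψ) 0| ≤ r / κ := by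
    rw [le_div_iff₀ hκ]; linarith
  refine mem_range_of_exists_le_of_exists_ge hcont ⟨-r, ?_⟩ ⟨r, ?_⟩
  · have := mono (-r)
    have e : (-r) ^ 2 / κ = r / κ * r := by ring
    rw [e] at this
    have : r / κ ≤ deriv (Lam ψ) 0 - deriv (Lam ψ) (-r) := by
      refine le_of_mul_le_mul_right (a := r) ?_ hr0
      linarith
    have := neg_abs_le (A - deriv (Lam ψ) 0)
    linarith
  · have := mono r
    have e : r ^ 2 / κ = r / κ * r := by ring
    rw [e] at this
    have := le_of_mul_le_mul_right this hr0
    have := le_abs_self (A - deriv (Lam ψ) 0)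
    linarith

lemma W_bddAbove (hk : 0 < k) (hκ : 0 < κ) (hψ : ContDiff ℝ 2 ψ)
    (h1 : ∀ y, k ≤ deriv (deriv ψ) y) (h2 : ∀ y, deriv (deriv ψ) y ≤ κ) (a : ℝ) :
    BddAbove (Set.range fun s : ℝ => s * a - log (∫ y : ℝ, exp (-ψ y + s * y))) := by
  obtain ⟨s₀, hs₀⟩ := exists_deriv_Lam_eq hk hκ hψ h1 h2 a
  refine ⟨s₀ * a - Lam ψ s₀, ?_⟩
  rintro _ ⟨s, rfl⟩
  have := Lam_tangent hk hκ hψ h1 h2 s₀ (s - s₀)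
  rw [hs₀, add_sub_cancel] at this
  have h0 : 0 ≤ (s - s₀) ^ 2 / (2 * κ) := by positivity
  change s * a - Lam ψ s ≤ _
  linarith

lemma le_W (hk : 0 < k) (hκ : 0 < κ) (hψ : ContDiff ℝ 2 ψ)
    (h1 : ∀ y, k ≤ deriv (deriv ψ) y) (h2 : ∀ y, deriv (deriv ψ) y ≤ κ) (s a : ℝ) :
    s * a - Lam ψ s ≤ W ψ a :=
  le_ciSup (W_bddAbove hk hκ hψ h1 h2 a) s

/-- The quadratic upper bound on `W`, dual to the strong convexity of `Lam`. -/
lemma W_add_le (hk : 0 < k) (hκ : 0 < κ) (hψ : ContDiff ℝ 2 ψ)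
    (h1 : ∀ y, k ≤ deriv (deriv ψ) y) (h2 : ∀ y, deriv (deriv ψ) y ≤ κ) (s v : ℝ) :
    W ψ (deriv (Lam ψ) s + v) ≤ s * (deriv (Lam ψ) s + v) - Lam ψ s + κ / 2 * v ^ 2 := by
  refine ciSup_le fun r => ?_
  have := Lam_tangent hk hκ hψ h1 h2 s (r - s)
  rw [add_sub_cancel] at this
  have h0 : 0 ≤ (r - s - κ * v) ^ 2 / (2 * κ) := by positivity
  have e : (r - s - κ * v) ^ 2 / (2 * κ)
      = (r - s) ^ 2 / (2 * κ) - (r - s) * v + κ / 2 * v ^ 2 := by field_simp; ring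
  change r * _ - Lam ψ r ≤ _
  nlinarith

lemma W_eq (hk : 0 < k) (hκ : 0 < κ) (hψ : ContDiff ℝ 2 ψ)
    (h1 : ∀ y, k ≤ deriv (deriv ψ) y) (h2 : ∀ y, deriv (deriv ψ) y ≤ κ) (s : ℝ) :
    W ψ (deriv (Lam ψ) s) = s * deriv (Lam ψ) s - Lam ψ s := by
  refine le_antisymm ?_ (le_W hk hκ hψ h1 h2 s _)
  simpa using W_add_le hk hκ hψ h1 h2 s 0

lemma deriv_W (hk : 0 < k) (hκ : 0 < κ) (hψ : ContDiff ℝ 2 ψ)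
    (h1 : ∀ y, k ≤ deriv (deriv ψ) y) (h2 : ∀ y, deriv (deriv ψ) y ≤ κ) (s : ℝ) :
    deriv (W ψ) (deriv (Lam ψ) s) = s := by
  set a := deriv (Lam ψ) s with ha
  have hW := W_eq hk hκ hψ h1 h2 s
  rw [← ha] at hW
  have : HasDerivAt (W ψ) s a := by
    rw [hasDerivAt_iff_isLittleO_nhds_zero]
    refine Asymptotics.IsBigO.trans_isLittleO (g := fun v : ℝ => v ^ 2) ?_ ?_
    · refine Asymptotics.IsBigO.of_bound (κ / 2) (Eventually.of_forall fun v => ?_)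
      have b1 := W_add_le hk hκ hψ h1 h2 s v
      have b2 := le_W hk hκ hψ h1 h2 s (a + v)
      rw [← ha] at b1
      rw [Real.norm_eq_abs, Real.norm_eq_abs, abs_of_nonneg (sq_nonneg v), smul_eq_mul, abs_le]
      have : 0 ≤ κ / 2 * v ^ 2 := by positivity
      constructor <;> linarith
    · simpa using Asymptotics.isLittleO_pow_id (𝕜 := ℝ) (n := 2) (by norm_num)
  exact this.deriv

/-- `deriv (Lam ψ)` is Lipschitz on bounded sets. -/
lemma deriv_Lam_lipschitz (hk : 0 < k) (hψ : ContDiff ℝ 2 ψ)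
    (h1 : ∀ y, k ≤ deriv (deriv ψ) y) (s R : ℝ) :
    ∃ L, 0 ≤ L ∧ ∀ u, |u| ≤ R → |deriv (Lam ψ) (s + u) - deriv (Lam ψ) s| ≤ L * |u| := by
  have hC := contDiff_Lam hk hψ h1
  have hC1 : ContDiff ℝ 1 (deriv (Lam ψ)) := ((contDiff_succ_iff_deriv (n := 1)).1 hC).2.2
  have hcont : Continuous (deriv (deriv (Lam ψ))) := hC1.continuous_deriv le_rfl
  obtain ⟨L, hL⟩ := (isCompact_Icc (a := s - R) (b := s + R)).exists_bound_of_continuousOn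
    hcont.continuousOn
  refine ⟨max L 0, le_max_right _ _, fun u hu => ?_⟩
  have hu' := abs_le.1 hu
  have hR : 0 ≤ R := (abs_nonneg u).trans hu
  have := (convex_Icc (s - R) (s + R)).norm_image_sub_le_of_norm_deriv_le
    (f := deriv (Lam ψ)) (C := max L 0)
    (fun x _ => hC1.differentiable (by norm_num) x) (fun x hx => (hL x hx).trans (le_max_left _ _))
    (x := s) (y := s + u) ⟨by linarith, by linarith⟩ ⟨by linarith, by linarith⟩
  simpa [Real.norm_eq_abs] using this

end Legendre

/-! ### The coarse-grained energy in terms of `Lam` -/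

section CoarseGrained

variable {ψ : ℝ → ℝ} {k κ : ℝ}

lemma abs_le_tsum_abs {h : ℕ → ℝ} (hh : Summable fun i => |h i|) (i : ℕ) :
    |h i| ≤ ∑' j, |h j| := hh.le_tsum i fun _ _ => abs_nonneg _

/-- The infimum defining the elastic far-field energy is attained bond by bond, at the strain
`A + v i = Lam' (s - h (i + 2))`, where `s` is the stress dual to `A`. -/
lemma infJinf_eq (hk : 0 < k) (hκ : 0 < κ) (hψ : ContDiff ℝ 2 ψ)
    (h1 : ∀ y, k ≤ deriv (deriv ψ) y) (h2 : ∀ y, deriv (deriv ψ) y ≤ κ)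
    {h : ℕ → ℝ} (hh : Summable fun i => |h i|) {A s : ℝ} (hs : deriv (Lam ψ) s = A) :
    (Summable fun i => Lam ψ s - Lam ψ (s - h (i + 2)) - h (i + 2) * A) ∧
    infJinf (W ψ) h A = ∑' i, (Lam ψ s - Lam ψ (s - h (i + 2)) - h (i + 2) * A) := by
  have hWA : W ψ A = s * A - Lam ψ s := by
    have := W_eq hk hκ hψ h1 h2 s
    rwa [hs] at this
  have hdW : deriv (W ψ) A = s := by
    have := deriv_W hk hκ hψ h1 h2 s
    rwa [hs] at this
  set B := ∑' j, |h j| with hB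
  have hh2 : Summable fun i => |h (i + 2)| := (summable_nat_add_iff 2).2 hh
  have hsq : Summable fun i => h (i + 2) ^ 2 := by
    refine Summable.of_nonneg_of_le (fun i => sq_nonneg _) (fun i => ?_) (hh2.mul_left B)
    rw [← sq_abs, sq]
    exact mul_le_mul_of_nonneg_right (abs_le_tsum_abs hh _) (abs_nonneg _)
  have hsum : ∀ v : ℕ → ℝ, Summable (fun i => v i ^ 2) → Summable fun i =>
      W ψ (A + v i) - W ψ A - deriv (W ψ) A * v i + h (i + 2) * v i := by
    intro v hv
    refine Summable.of_norm_bounded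
      (g := fun i => κ / 2 * v i ^ 2 + (h (i + 2) ^ 2 + v i ^ 2)) ((hv.mul_left _).add (hsq.add hv))
      fun i => ?_
    have b1 := W_add_le hk hκ hψ h1 h2 s (v i)
    have b2 := le_W hk hκ hψ h1 h2 s (A + v i)
    rw [hs] at b1
    rw [hWA, hdW, Real.norm_eq_abs, abs_le]
    have c0 : 0 ≤ κ / 2 * v i ^ 2 := by positivity
    constructor <;> nlinarith [sq_nonneg (h (i + 2) + v i), sq_nonneg (h (i + 2) - v i),
      sq_nonneg (h (i + 2)), sq_nonneg (v i)]
  have hlow : ∀ (v : ℕ → ℝ) i, Lam ψ s - Lam ψ (s - h (i + 2)) - h (i + 2) * A ≤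
      W ψ (A + v i) - W ψ A - deriv (W ψ) A * v i + h (i + 2) * v i := by
    intro v i
    have := le_W hk hκ hψ h1 h2 (s - h (i + 2)) (A + v i)
    rw [hWA, hdW]
    linarith
  -- the optimal increments
  set v₀ : ℕ → ℝ := fun i => deriv (Lam ψ) (s - h (i + 2)) - A with hv₀
  have hv₀sum : Summable fun i => v₀ i ^ 2 := by
    obtain ⟨L, hL0, hL⟩ := deriv_Lam_lipschitz hk hψ h1 s B
    refine Summable.of_nonneg_of_le (fun i => sq_nonneg _) (fun i => ?_) (hsq.mul_left (L ^ 2))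
    have := hL (-h (i + 2)) (by rw [abs_neg]; exact abs_le_tsum_abs hh _)
    rw [← sub_eq_add_neg, hs, abs_neg] at this
    calc v₀ i ^ 2 = |v₀ i| ^ 2 := (sq_abs _).symm
      _ ≤ (L * |h (i + 2)|) ^ 2 := by gcongr
      _ = L ^ 2 * h (i + 2) ^ 2 := by rw [mul_pow, sq_abs]
  have hopt : (fun i => W ψ (A + v₀ i) - W ψ A - deriv (W ψ) A * v₀ i + h (i + 2) * v₀ i)
      = fun i => Lam ψ s - Lam ψ (s - h (i + 2)) - h (i + 2) * A := by
    funext i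
    have := W_eq hk hκ hψ h1 h2 (s - h (i + 2))
    rw [hWA, hdW]
    simp only [hv₀]
    rw [add_sub_cancel, this]
    ring
  have hS : Summable fun i => Lam ψ s - Lam ψ (s - h (i + 2)) - h (i + 2) * A :=
    hopt ▸ hsum v₀ hv₀sum
  refine ⟨hS, IsLeast.csInf_eq ⟨⟨v₀, hv₀sum, by rw [hopt]⟩, ?_⟩⟩
  rintro E ⟨v, hv, rfl⟩
  exact hS.tsum_le_tsum (hlow v) (hsum v hv)

lemma coarse_energy_eq (hk : 0 < k) (hκ : 0 < κ) (hψ : ContDiff ℝ 2 ψ)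
    (h1 : ∀ y, k ≤ deriv (deriv ψ) y) (h2 : ∀ y, deriv (deriv ψ) y ≤ κ)
    {h : ℕ → ℝ} (hh : Summable fun i => |h i|) {A s : ℝ} (hs : deriv (Lam ψ) s = A) :
    (Summable fun i => Lam ψ (s - h (i + 2)) - Lam ψ s) ∧
    A * (∑' i, h (i + 2)) + infJinf (W ψ) h A = -∑' i, (Lam ψ (s - h (i + 2)) - Lam ψ s) := by
  obtain ⟨hS, he⟩ := infJinf_eq hk hκ hψ h1 h2 hh hs
  have hh2 : Summable fun i => A * h (i + 2) :=
    ((summable_nat_add_iff 2).2 hh.of_abs).mul_left A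
  have e : (fun i => Lam ψ (s - h (i + 2)) - Lam ψ s) = fun i =>
      -(A * h (i + 2) + (Lam ψ s - Lam ψ (s - h (i + 2)) - h (i + 2) * A)) := by
    funext i; ring
  rw [e]
  refine ⟨(hh2.add hS).neg, ?_⟩
  rw [tsum_neg, neg_neg, hh2.tsum_add hS, tsum_mul_left, he]

/-! ### Verification of the hypotheses on the bond factors -/

/-- The bond factor at stress `s - x` has mean close to `A`, up to an error `L * |x|`. -/
lemma nice_bond (hk : 0 < k) (hκ : 0 < κ) (hψ : ContDiff ℝ 2 ψ)
    (h1 : ∀ y, k ≤ deriv (deriv ψ) y) (h2 : ∀ y, deriv (deriv ψ) y ≤ κ)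
    {A s B L : ℝ} (hs : deriv (Lam ψ) s = A) (hL0 : 0 ≤ L)
    (hL : ∀ u, |u| ≤ B + 1 → |deriv (Lam ψ) (s + u) - deriv (Lam ψ) s| ≤ L * |u|)
    {x : ℝ} (hx : |x| ≤ B) :
    Nice κ L A 1 (L * |x|) fun y => exp (-ψ y + (s - x) * y) where
  toReg := reg_exp hk hψ h1 _
  semi y t := by
    have := semi_exp hψ h2 (s - x) y t
    simpa using this
  mom l hl := by
    rw [integral_exp_mul]
    change _ ≤ Z ψ (s - x) * _
    have t1 := Lam_tangent hk hκ hψ h1 h2 (s - x + l) (-l)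
    rw [add_neg_cancel_right] at t1
    have hsq : 0 ≤ (-l) ^ 2 / (2 * κ) := by positivity
    have habs : |l - x| ≤ |l| + |x| := abs_sub l x
    have t2 := hL (l - x) (by linarith)
    rw [hs, show s + (l - x) = s - x + l by ring] at t2
    have t3 : (deriv (Lam ψ) (s - x + l) - A) * l ≤ L * l ^ 2 + L * |x| := by
      calc (deriv (Lam ψ) (s - x + l) - A) * l
          ≤ |deriv (Lam ψ) (s - x + l) - A| * |l| := by
            rw [← abs_mul]; exact le_abs_self _
        _ ≤ L * (|l| + |x|) * |l| := by
            refine mul_le_mul_of_nonneg_right (t2.trans ?_) (abs_nonneg _)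
            exact mul_le_mul_of_nonneg_left habs hL0
        _ = L * l ^ 2 + L * |x| * |l| := by rw [← sq_abs l]; ring
        _ ≤ L * l ^ 2 + L * |x| := by
            have : L * |x| * |l| ≤ L * |x| * 1 :=
              mul_le_mul_of_nonneg_left hl (mul_nonneg hL0 (abs_nonneg _))
            linarith
    have hp := Z_pos hk hψ h1
    rw [← log_le_log_iff (hp _) (mul_pos (hp _) (exp_pos _)), log_mul (hp _).ne' (exp_pos _).ne',
      log_exp]
    change Lam ψ (s - x + l) ≤ Lam ψ (s - x) + _
    push_cast
    linarith

/-- A single factor without any centering is `Nice` at the price of a constant `β`. -/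
lemma nice_defect {g : ℝ → ℝ} (hg : Reg g)
    (hsemi : ∀ x t, g x ^ 2 * exp (-κ * t ^ 2) ≤ g (x + t) * g (x - t))
    (A : ℝ) {L : ℝ} (hL0 : 0 ≤ L) : ∃ β, 0 ≤ β ∧ Nice κ L A 1 β g := by
  set M : ℝ := (∫ y, exp (1 * y) * g y) + ∫ y, exp (-1 * y) * g y with hM
  have hI := hg.integral_pos
  have hM0 : 0 < M := add_pos
    (integral_pos_of_integrable_nonneg_nonzero (x := 0)
      (Continuous.mul (by fun_prop) hg.cont) (hg.int 1)
      (fun y => (mul_pos (exp_pos _) (hg.pos y)).le) (mul_pos (exp_pos _) (hg.pos _)).ne')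
    (integral_pos_of_integrable_nonneg_nonzero (x := 0)
      (Continuous.mul (by fun_prop) hg.cont) (hg.int (-1))
      (fun y => (mul_pos (exp_pos _) (hg.pos y)).le) (mul_pos (exp_pos _) (hg.pos _)).ne')
  refine ⟨|log M - log (∫ y, g y)| + |A|, by positivity, ⟨hg, ?_, ?_⟩⟩
  · intro x t
    simpa using hsemi x t
  · intro l hl
    have hle : ∫ y, exp (l * y) * g y ≤ M := by
      rw [hM, ← integral_add (hg.int 1) (hg.int (-1))]
      refine integral_mono (hg.int l) ((hg.int 1).add (hg.int (-1))) fun y => ?_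
      simp only
      rw [← add_mul]
      refine mul_le_mul_of_nonneg_right ?_ (hg.pos y).le
      have hly : l * y ≤ |y| := by
        calc l * y ≤ |l| * |y| := by rw [← abs_mul]; exact le_abs_self _
          _ ≤ 1 * |y| := mul_le_mul_of_nonneg_right hl (abs_nonneg _)
          _ = |y| := one_mul _
      refine (exp_le_exp.2 hly).trans ?_
      rw [one_mul, neg_one_mul]
      exact exp_abs_le y
    refine hle.trans ?_
    rw [← log_le_log_iff hM0 (mul_pos hI (exp_pos _)), log_mul hI.ne' (exp_pos _).ne', log_exp]
    have a1 := le_abs_self (log M - log (∫ y, g y))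
    have a2 : -(l * A) ≤ |A| := by
      calc -(l * A) ≤ |l| * |A| := by rw [← abs_mul]; exact neg_le_abs _
        _ ≤ 1 * |A| := mul_le_mul_of_nonneg_right hl (abs_nonneg _)
        _ = |A| := one_mul _
    have a3 : 0 ≤ L * l ^ 2 := by positivity
    push_cast
    linarith

lemma abs_exp_sub_one_le_mul_exp (u : ℝ) : |exp u - 1| ≤ |u| * exp |u| := by
  have h1 : 1 ≤ exp |u| := one_le_exp (abs_nonneg u)
  have h2 : |u| ≤ |u| * exp |u| := le_mul_of_one_le_right (abs_nonneg u) h1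
  rw [abs_le]
  constructor
  · have := add_one_le_exp u
    have := neg_abs_le u
    linarith
  · have a : exp u * (-u + 1) ≤ 1 := by
      calc exp u * (-u + 1) ≤ exp u * exp (-u) :=
            mul_le_mul_of_nonneg_left (add_one_le_exp _) (exp_pos _).le
        _ = 1 := by rw [← exp_add, add_neg_cancel, exp_zero]
    have b : u * exp u ≤ |u| * exp |u| :=
      mul_le_mul (le_abs_self u) (exp_le_exp.2 (le_abs_self u)) (exp_pos _).le (abs_nonneg u)
    linarith

lemma integral_abs_sub_le (hk : 0 < k) (hψ : ContDiff ℝ 2 ψ)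
    (h1 : ∀ y, k ≤ deriv (deriv ψ) y) {B x : ℝ} (s : ℝ) (hx : |x| ≤ B) :
    ∫ y, |exp (-ψ y + (s - x) * y) - exp (-ψ y + s * y)|
      ≤ |x| * (Z ψ (s + (B + 1)) + Z ψ (s + -(B + 1))) := by
  have hr := reg_exp hk hψ h1
  rw [← integral_exp_mul, ← integral_exp_mul, ← integral_add ((hr s).int _) ((hr s).int _),
    ← integral_const_mul]
  refine integral_mono ((hr (s - x)).integrable.sub (hr s).integrable).abs
    ((((hr s).int (B + 1)).add ((hr s).int (-(B + 1)))).const_mul |x|) fun y => ?_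
  simp only
  have e : exp (-ψ y + (s - x) * y) - exp (-ψ y + s * y)
      = (exp (-(x * y)) - 1) * exp (-ψ y + s * y) := by
    rw [sub_mul (exp _), ← exp_add, one_mul]; congr 2; ring
  rw [e, abs_mul, abs_of_pos (exp_pos (-ψ y + s * y)), ← add_mul, ← mul_assoc]
  refine mul_le_mul_of_nonneg_right ?_ (exp_pos _).le
  refine (abs_exp_sub_one_le_mul_exp _).trans ?_
  rw [abs_neg, abs_mul, mul_assoc]
  refine mul_le_mul_of_nonneg_left ?_ (abs_nonneg x)
  calc |y| * exp (|x| * |y|) ≤ exp |y| * exp (B * |y|) := by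
        refine mul_le_mul ?_ ?_ (exp_pos _).le (exp_pos _).le
        · have := add_one_le_exp |y|; linarith
        · exact exp_le_exp.2 (mul_le_mul_of_nonneg_right hx (abs_nonneg y))
    _ = exp |(B + 1) * y| := by
        have : 0 ≤ B + 1 := by have := abs_nonneg x; linarith
        rw [← exp_add, abs_mul, abs_of_nonneg this]; congr 1; ring
    _ ≤ exp ((B + 1) * y) + exp (-((B + 1) * y)) := exp_abs_le _
    _ = _ := by rw [neg_mul]

end CoarseGrained

/-! ### The thermodynamic limit -/

/-- thermodynamic limit of the defect-formation free energy with external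
forces, represented via the coarse-grained energy. -/
theorem thermodynamic_limit_with_forces
    (ψ P : ℝ → ℝ) (κ₁ κ₂ ς₁ ς₂ : ℝ)
    (hψ : ContDiff ℝ 2 ψ) (hP : ContDiff ℝ 2 P)
    (hκ₁ : 0 < κ₁) (hκ : κ₁ ≤ κ₂) (hς₁ : 0 < ς₁) (hς : ς₁ ≤ ς₂)
    (hψ'' : ∀ y : ℝ, κ₁ ≤ deriv (deriv ψ) y ∧ deriv (deriv ψ) y ≤ κ₂)
    (hψP'' : ∀ y : ℝ, ς₁ ≤ deriv (deriv (fun z => ψ z + P z)) y ∧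
        deriv (deriv (fun z => ψ z + P z)) y ≤ ς₂)
    (h : ℕ → ℝ) (hh : Summable fun i => |h i|)
    (A : ℝ) :
    Tendsto
      (fun N : ℕ =>
        freeEnergy (fun i z => ψ z + h i * z) P N A -
          freeEnergy (fun _ => ψ) (fun _ => 0) N A)
      atTop
      (nhds (- Real.log
        ((∫ y : ℝ, Real.exp (-(ψ y + h 1 * y + P y) - EcgF ψ h A y)) /
         (∫ y : ℝ, Real.exp (-ψ y - deriv (W ψ) A * (A - y)))))) := by
  -- a common upper bound for both second derivatives
  set κ := max κ₂ ς₂ with hκdef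
  have hκ0 : 0 < κ := lt_of_lt_of_le (hκ₁.trans_le hκ) (le_max_left _ _)
  have h1 : ∀ y, κ₁ ≤ deriv (deriv ψ) y := fun y => (hψ'' y).1
  have h2 : ∀ y, deriv (deriv ψ) y ≤ κ := fun y => (hψ'' y).2.trans (le_max_left _ _)
  have hψP : ContDiff ℝ 2 fun z => ψ z + P z := hψ.add hP
  have g1 : ∀ y, ς₁ ≤ deriv (deriv fun z => ψ z + P z) y := fun y => (hψP'' y).1
  have g2 : ∀ y, deriv (deriv fun z => ψ z + P z) y ≤ κ := fun y =>
    (hψP'' y).2.trans (le_max_right _ _)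
  -- the stress dual to the strain `A`
  obtain ⟨s, hs⟩ := exists_deriv_Lam_eq hκ₁ hκ0 hψ h1 h2 A
  have hdW : deriv (W ψ) A = s := by
    have := deriv_W hκ₁ hκ0 hψ h1 h2 s
    rwa [hs] at this
  set B := ∑' j, |h j| with hB
  have hhB : ∀ i, |h i| ≤ B := abs_le_tsum_abs hh
  have hB0 : 0 ≤ B := (abs_nonneg _).trans (hhB 0)
  obtain ⟨L, hL0, hL⟩ := deriv_Lam_lipschitz hκ₁ hψ h1 s (B + 1)
  -- the bond factors, tilted by the stress `s`
  set p : ℝ → ℝ := fun y => exp (-ψ y + s * y) with hp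
  set q₀ : ℝ → ℝ := fun y => exp (-(ψ y + P y) + (s - h 1) * y) with hq₀
  set q : ℕ → ℝ → ℝ := fun i =>
    if i = 0 then q₀ else fun y => exp (-ψ y + (s - h (i + 1)) * y) with hq
  have hqz : q 0 = q₀ := rfl
  have hqs : ∀ i, q (i + 1) = fun y => exp (-ψ y + (s - h (i + 2)) * y) := fun i => rfl
  have hq₀reg : Reg q₀ := reg_exp hς₁ hψP g1 (s - h 1)
  obtain ⟨β₀, hβ₀, hq₀nice⟩ := nice_defect (κ := κ) hq₀reg (semi_exp hψP g2 (s - h 1)) A hL0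
  have hpnice : Nice κ L A 1 0 p := by
    have := nice_bond hκ₁ hκ0 hψ h1 h2 hs hL0 hL (x := 0) (by simpa using hB0)
    simpa using this
  have hZp : ∫ y, p y = exp (Lam ψ s) := by
    rw [Lam, exp_log (Z_pos hκ₁ hψ h1 s), Z]
  set c := exp (Lam ψ s - |A| * B) with hc
  have hmq : ∀ x, |x| ≤ B → c ≤ ∫ y, exp (-ψ y + (s - x) * y) := by
    intro x hx
    change c ≤ Z ψ (s - x)
    rw [← exp_log (Z_pos hκ₁ hψ h1 (s - x)), hc]
    apply exp_le_exp.2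
    change _ ≤ Lam ψ (s - x)
    have := Lam_tangent hκ₁ hκ0 hψ h1 h2 s (-x)
    rw [hs, ← sub_eq_add_neg] at this
    have h0 : 0 ≤ (-x) ^ 2 / (2 * κ) := by positivity
    have h3 : A * x ≤ |A| * B := by
      calc A * x ≤ |A| * |x| := by rw [← abs_mul]; exact le_abs_self _
        _ ≤ |A| * B := mul_le_mul_of_nonneg_left hx (abs_nonneg _)
    linarith
  have hh2 : Summable fun i => |h (i + 2)| := (summable_nat_add_iff 2).2 hh
  have hlim : Tendsto (fun n : ℕ => log (ch q n ((n + 1) * A)) -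
      log (ch (fun _ => p) n ((n + 1) * A))) atTop
      (nhds (∑' i, (log (∫ y, q i y) - log (∫ y, p y)))) := by
    refine tendsto_log_ch hκ0 (lt_min hq₀reg.integral_pos (exp_pos (Lam ψ s - |A| * B)))
      (C := L) (A := A) (p := p) (q := q)
      (β := fun i => if i = 0 then β₀ else L * |h (i + 1)|)
      (b := fun i => if i = 0 then ∫ y, |q₀ y - p y| else
        |h (i + 1)| * (Z ψ (s + (B + 1)) + Z ψ (s + -(B + 1)))) hpnice ?_ ?_ ?_ ?_ ?_ ?_ ?_
    · intro i
      cases i with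
      | zero => exact hq₀nice
      | succ i => exact nice_bond hκ₁ hκ0 hψ h1 h2 hs hL0 hL (hhB (i + 2))
    · intro i
      cases i with
      | zero => exact hβ₀
      | succ i => exact mul_nonneg hL0 (abs_nonneg _)
    · exact (summable_nat_add_iff 1).1 (hh2.mul_left L)
    · intro i
      cases i with
      | zero => exact le_rfl
      | succ i => exact integral_abs_sub_le hκ₁ hψ h1 s (hhB (i + 2))
    · exact (summable_nat_add_iff 1).1 (hh2.mul_right _)
    · have := hmq 0 (by simpa using hB0)
      rw [sub_zero] at this
      exact (min_le_right _ _).trans this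
    · intro i
      cases i with
      | zero => exact min_le_left _ _
      | succ i => exact (min_le_right _ _).trans (hmq _ (hhB (i + 2)))
  -- evaluation of the limit
  obtain ⟨hS, hE⟩ := coarse_energy_eq hκ₁ hκ0 hψ h1 h2 hh hs
  have hsum : ∑' i, (log (∫ y, q i y) - log (∫ y, p y))
      = log (∫ y, q₀ y) - Lam ψ s - (A * (∑' i, h (i + 2)) + infJinf (W ψ) h A) := by
    have hS' : Summable fun i => log (∫ y, q i y) - log (∫ y, p y) :=
      (summable_nat_add_iff 1).1 hS
    rw [hS'.tsum_eq_zero_add, hE, sub_neg_eq_add]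
    rfl
  have hval : -Real.log
        ((∫ y : ℝ, Real.exp (-(ψ y + h 1 * y + P y) - EcgF ψ h A y)) /
         (∫ y : ℝ, Real.exp (-ψ y - deriv (W ψ) A * (A - y))))
      = -∑' i, (log (∫ y, q i y) - log (∫ y, p y)) := by
    set E := A * (∑' i, h (i + 2)) + infJinf (W ψ) h A with hEdef
    have i1 : ∫ y : ℝ, Real.exp (-(ψ y + h 1 * y + P y) - EcgF ψ h A y)
        = exp (-(A * s) - E) * ∫ y, q₀ y := by
      rw [← integral_const_mul]
      refine integral_congr_ae (ae_of_all _ fun y => ?_)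
      simp only [EcgF, hq₀, hdW, hEdef]
      rw [← exp_add]; congr 1; ring
    have i2 : ∫ y : ℝ, Real.exp (-ψ y - deriv (W ψ) A * (A - y))
        = exp (-(A * s)) * ∫ y, p y := by
      rw [← integral_const_mul]
      refine integral_congr_ae (ae_of_all _ fun y => ?_)
      simp only [hp, hdW]
      rw [← exp_add]; congr 1; ring
    have hI := hq₀reg.integral_pos
    rw [hsum, i1, i2, hZp, log_div (mul_pos (exp_pos _) hI).ne' (by positivity),
      log_mul (exp_pos _).ne' hI.ne', log_mul (exp_pos _).ne' (exp_pos _).ne', log_exp, log_exp,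
      log_exp]
    ring
  rw [hval, ← tendsto_add_atTop_iff_nat 1]
  refine hlim.neg.congr fun n => ?_
  -- both free energies are convolutions, and the tilt by `s` cancels in the difference
  set φ : ℕ → ℝ → ℝ := fun i z => ψ z + h i * z with hφ
  have hψc := hψ.continuous
  have bondq : (fun i y => exp (s * y) * bond φ P i y) = q := by
    funext i y
    cases i with
    | zero =>
      simp only [bond, if_true, hφ, hqz, hq₀]
      rw [← exp_add]; congr 1; ring
    | succ i =>
      rw [hqs]
      simp only [bond, Nat.succ_ne_zero, if_false, hφ]
      rw [← exp_add]; congr 1; ring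
  have bondp : (fun i y => exp (s * y) * bond (fun _ => ψ) (fun _ => 0) i y) = fun _ => p := by
    funext i y
    simp only [bond, sub_zero, ite_self, hp]
    rw [← exp_add]; congr 1; ring
  have regq : ∀ i, Reg (bond φ P i) := by
    intro i
    cases i with
    | zero =>
      convert reg_exp hς₁ hψP g1 (-h 1) using 2 with y
      simp only [bond, if_true, hφ]; congr 1; ring
    | succ i =>
      convert reg_exp hκ₁ hψ h1 (-h (i + 2)) using 2 with y
      simp only [bond, Nat.succ_ne_zero, if_false, hφ]; congr 1; ring
  have regp : ∀ i, Reg (bond (fun _ => ψ) (fun _ => 0) i) := by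
    intro i
    convert reg_exp hκ₁ hψ h1 0 using 2 with y
    simp only [bond, sub_zero, ite_self]; congr 1; ring
  have f1 : freeEnergy φ P (n + 1) A = -log (ch (bond φ P) n ((n + 1) * A)) := by
    have := (chain_integral (φ := φ) (D := P) (fun i => by fun_prop) hP.continuous regq n
      ((n + 1) * A)).2
    rw [← this, freeEnergy]
    push_cast
    rfl
  have f2 : freeEnergy (fun _ => ψ) (fun _ => 0) (n + 1) A
      = -log (ch (bond (fun _ => ψ) (fun _ => 0)) n ((n + 1) * A)) := by
    have := (chain_integral (φ := fun _ => ψ) (D := fun _ => 0) (fun i => hψc) continuous_const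
      regp n ((n + 1) * A)).2
    rw [← this, freeEnergy]
    push_cast
    rfl
  rw [f1, f2, ← bondq, ← bondp, ch_exp, ch_exp,
    log_mul (exp_pos _).ne' ((ch_reg regq n).pos _).ne',
    log_mul (exp_pos _).ne' ((ch_reg regp n).pos _).ne']
  ring
end
end

section
/- For the harmonic potentials ψ(y) = α·y² and P(y) = β·y² with α, β > 0, the defect-formation free energy is given explicitly for every A ∈ ℝ and every integer N ≥ 2 by G_N(A) = (1/2)·log((α+β)/α) + α·β·A²/(α+β) − N·α·β²·A²/(N·(α+β) − β)² + (α·β·A²/(α+β))·( 2β/(N·(α+β) − β) + β²/(N·(α+β) − β)² ) + (1/2)·log(1 − β/(N·(α+β))); consequently the thermodynamic limit is G_∞(A) = lim_{N→∞} G_N(A) = α·β·A²/(α+β) + (1/2)·log((α+β)/α), and for every A ∈ ℝ there is a constant C > 0 with |G_N(A) − G_∞(A)| ≤ C/N for all N ≥ 2. -/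
/-!
Only the first bond carries the defect, so it is integrated last. Integrating out a site between
two harmonic bonds of stiffness `a` and `d` leaves a harmonic bond of stiffness `a * d / (a + d)`
times a constant (`lintegral_gauss_conv`). Hence the chain of `n + 1` bonds of stiffness `α` joining
`x` to `b` has partition function `K * exp (-(α / (n + 1)) * (b - x) ^ 2)`, where `K > 0` depends
neither on `x` nor on `b` (`lintegral_chain`). One more Gaussian integral, over `u₁`, gives the
partition function with first bond of stiffness `α` or `α + β` (`partition_eq`); the constant `K`
is common to both and cancels in the difference of free energies. After simplification the
difference is
`(1/2) log ((α+β)/α) + (α β A² / (α+β)) (1 + β/D) + (1/2) log (1 - β/(N(α+β)))` with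
`D = N(α+β) - β`; since `D ≥ N α`, both corrections are of order `1/N`, which gives the rate, and
the limit follows from the rate.

Partition functions are computed as `ℝ≥0∞`-valued integrals, so that Tonelli's theorem applies
without integrability side conditions.
-/

noncomputable section

open MeasureTheory Real Filter

/-- The chain `x, u 0, …, u (n - 1), b, b, …`: as `bc`, with an arbitrary left end `x` and with
`n` the number of interior sites. -/
def chainExt (n : ℕ) (x b : ℝ) (u : Fin n → ℝ) : ℕ → ℝ := fun i =>
  if i = 0 then x else if h : i - 1 < n then u ⟨i - 1, h⟩ else b

lemma bc_eq_chainExt (n : ℕ) (b : ℝ) (u : Fin n → ℝ) (i : ℕ) :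
    bc (n + 1) b u i = chainExt n 0 b u i := by
  unfold bc chainExt
  by_cases h0 : i = 0
  · simp [h0]
  · by_cases h : i < n + 1
    · have h1 : 0 < i ∧ i < n + 1 := ⟨by omega, h⟩
      have h2 : i - 1 < n := by omega
      simp only [h1, h2, h0, and_self, dite_true, if_false]
    · have h1 : ¬ (0 < i ∧ i < n + 1) := by omega
      have h2 : ¬ (i - 1 < n) := by omega
      simp only [h1, h2, h0, dite_false, if_false]

lemma chainExt_succ (n : ℕ) (x b y : ℝ) (v : Fin n → ℝ) (i : ℕ) :
    chainExt (n + 1) x b (Fin.cons y v) (i + 1) = chainExt n y b v i := by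
  unfold chainExt
  rcases i with _ | i
  · simp
  · by_cases h : i < n
    · have h2 : i + 1 < n + 1 := by omega
      simp only [Nat.add_sub_cancel, h, h2, dite_true]
      simp only [Nat.add_eq_zero_iff, one_ne_zero, and_false, if_false]
      exact Fin.cons_succ (α := fun _ => ℝ) y v ⟨i, h⟩
    · have h2 : ¬ (i + 1 < n + 1) := by omega
      simp [h]

/-- Harmonic energy, with stiffness `α`, of the chain `chainExt n x b u`, which has `n + 1` bonds. -/
def harmE (α : ℝ) (n : ℕ) (x b : ℝ) (u : Fin n → ℝ) : ℝ :=
  ∑ i ∈ Finset.range (n + 1), α * (chainExt n x b u (i + 1) - chainExt n x b u i) ^ 2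

lemma harmE_cons (α : ℝ) (n : ℕ) (x b y : ℝ) (v : Fin n → ℝ) :
    harmE α (n + 1) x b (Fin.cons y v) = α * (y - x) ^ 2 + harmE α n y b v := by
  unfold harmE
  rw [Finset.sum_range_succ', add_comm (α * (y - x) ^ 2)]
  congr 1
  simp only [chainExt_succ]

lemma continuous_chainExt (n : ℕ) (x b : ℝ) (i : ℕ) :
    Continuous (fun u : Fin n → ℝ => chainExt n x b u i) := by
  unfold chainExt
  split_ifs <;> fun_prop

lemma continuous_harmE (α : ℝ) (n : ℕ) (x b : ℝ) : Continuous (harmE α n x b) := by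
  unfold harmE
  have := continuous_chainExt n x b
  fun_prop

lemma lintegral_fin_succ (n : ℕ) (f : (Fin (n + 1) → ℝ) → ENNReal) (hf : Measurable f) :
    ∫⁻ u, f u = ∫⁻ y : ℝ, ∫⁻ v : Fin n → ℝ, f (Fin.cons y v) := by
  have e := (volume_preserving_piFinSuccAbove (fun _ : Fin (n + 1) => ℝ) 0).symm
  rw [← e.lintegral_comp hf, Measure.volume_eq_prod,
    lintegral_prod (fun z => f ((MeasurableEquiv.piFinSuccAbove (fun _ => ℝ) 0).symm z))
      (hf.comp e.measurable).aemeasurable]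
  refine lintegral_congr fun y => lintegral_congr fun v => ?_
  exact congrArg f (Fin.insertNth_zero' y v)

/-- Two harmonic bonds in series: completing the square in the middle site `y`. -/
lemma lintegral_gauss_conv (a d x b : ℝ) (ha : 0 < a) (hd : 0 < d) :
    ∫⁻ y : ℝ, ENNReal.ofReal (exp (-(a * (y - x) ^ 2))) *
        ENNReal.ofReal (exp (-(d * (b - y) ^ 2))) =
      ENNReal.ofReal (√(π / (a + d)) * exp (-(a * d / (a + d) * (b - x) ^ 2))) := by
  have hs : 0 < a + d := by positivity
  have key : ∀ y : ℝ, ENNReal.ofReal (exp (-(a * (y - x) ^ 2))) *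
        ENNReal.ofReal (exp (-(d * (b - y) ^ 2))) =
      ENNReal.ofReal (exp (-(a + d) * (y - (a * x + d * b) / (a + d)) ^ 2) *
        exp (-(a * d / (a + d) * (b - x) ^ 2))) := by
    intro y
    rw [← ENNReal.ofReal_mul (exp_pos _).le, ← exp_add, ← exp_add]
    congr 2
    field_simp
    ring
  simp_rw [key]
  rw [← ofReal_integral_eq_lintegral_ofReal]
  · rw [integral_mul_const,
      integral_sub_right_eq_self (fun y : ℝ => exp (-(a + d) * y ^ 2)), integral_gaussian]
  · exact ((integrable_exp_neg_mul_sq hs).comp_sub_right _).mul_const _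
  · exact Eventually.of_forall fun y => by positivity

/-- Splits the first interior site off the chain, whose first bond carries an additional harmonic
defect of stiffness `c`. -/
lemma lintegral_head (α c : ℝ) (n : ℕ) (x b : ℝ) :
    ∫⁻ u : Fin (n + 1) → ℝ, ENNReal.ofReal
        (exp (-(harmE α (n + 1) x b u) - c * (u 0 - x) ^ 2)) =
      ∫⁻ y : ℝ, ENNReal.ofReal (exp (-((α + c) * (y - x) ^ 2))) *
        ∫⁻ v : Fin n → ℝ, ENNReal.ofReal (exp (-(harmE α n y b v))) := by
  have hc := continuous_harmE α (n + 1) x b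
  rw [lintegral_fin_succ _ _ (by fun_prop)]
  refine lintegral_congr fun y => ?_
  rw [← lintegral_const_mul']
  · refine lintegral_congr fun v => ?_
    rw [← ENNReal.ofReal_mul (exp_pos _).le, ← exp_add, harmE_cons, Fin.cons_zero]
    congr 2
    ring
  · exact ENNReal.ofReal_ne_top

/-- The partition function of `n + 1` equal bonds in series. The constant `K` depends neither on
the ends `x` and `b` nor on any defect, so its value is never needed. -/
lemma lintegral_chain (α : ℝ) (hα : 0 < α) (n : ℕ) :
    ∃ K : ℝ, 0 < K ∧ ∀ x b : ℝ,
      ∫⁻ v : Fin n → ℝ, ENNReal.ofReal (exp (-(harmE α n x b v))) =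
        ENNReal.ofReal K * ENNReal.ofReal (exp (-(α / (n + 1) * (b - x) ^ 2))) := by
  induction n with
  | zero =>
    refine ⟨1, one_pos, fun x b => ?_⟩
    rw [lintegral_unique]
    simp [harmE, chainExt, volume_pi]
  | succ n ih =>
    obtain ⟨K, hK, h⟩ := ih
    have hd : 0 < α / ((n : ℝ) + 1) := by positivity
    refine ⟨K * √(π / (α + α / (n + 1))), by positivity, fun x b => ?_⟩
    have h0 := lintegral_head α 0 n x b
    simp only [zero_mul, sub_zero, add_zero] at h0
    rw [h0]
    simp_rw [h, mul_left_comm _ (ENNReal.ofReal K)]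
    rw [lintegral_const_mul' _ _ ENNReal.ofReal_ne_top, lintegral_gauss_conv α _ x b hα hd,
      ← ENNReal.ofReal_mul hK.le, ← ENNReal.ofReal_mul (by positivity), mul_assoc]
    congr 5
    push_cast
    field_simp

/-- The partition functions with first bond of stiffness `α + c`, for all `c ≥ 0` at once: the
constant `K` does not depend on `c`. The chain has `m + 2` bonds, the last `m + 1` of which act as
one bond of stiffness `α / (m + 1)`. -/
lemma partition_eq (α : ℝ) (hα : 0 < α) (m : ℕ) (b : ℝ) :
    ∃ K : ℝ, 0 < K ∧ ∀ c : ℝ, 0 ≤ c →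
      ∫ u : Fin (m + 2 - 1) → ℝ, exp (-(chainE (fun _ y => α * y ^ 2) (m + 2) b u) -
          c * (bc (m + 2) b u 1) ^ 2) =
        K * (√(π / (α + c + α / (m + 1))) *
          exp (-((α + c) * (α / (m + 1)) / (α + c + α / (m + 1)) * b ^ 2))) := by
  obtain ⟨K, hK, h⟩ := lintegral_chain α hα m
  refine ⟨K, hK, fun c hc => ?_⟩
  have hd : 0 < α / ((m : ℝ) + 1) := by positivity
  have e1 : ∀ u : Fin (m + 1) → ℝ,
      exp (-(chainE (fun _ y => α * y ^ 2) (m + 2) b u) - c * (bc (m + 2) b u 1) ^ 2) =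
        exp (-(harmE α (m + 1) 0 b u) - c * (u 0 - 0) ^ 2) := by
    intro u
    have h1 : chainExt (m + 1) 0 b u 1 = u 0 := by simp [chainExt]
    simp only [chainE, harmE, bc_eq_chainExt (m + 1) b u, h1, sub_zero]
  change ∫ u : Fin (m + 1) → ℝ, _ = _
  simp_rw [e1]
  have hcont := continuous_harmE α (m + 1) 0 b
  rw [integral_eq_lintegral_of_nonneg_ae (Eventually.of_forall fun u => (exp_pos _).le)
    (Continuous.aestronglyMeasurable (by fun_prop)), lintegral_head]
  simp_rw [h, mul_left_comm _ (ENNReal.ofReal K)]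
  rw [lintegral_const_mul' _ _ ENNReal.ofReal_ne_top,
    lintegral_gauss_conv (α + c) _ 0 b (by positivity) hd,
    ← ENNReal.ofReal_mul hK.le, ENNReal.toReal_ofReal (by positivity), sub_zero]

/-- The defect-formation free energy in simplified form. -/
lemma defect_free_energy (α β : ℝ) (hα : 0 < α) (hβ : 0 < β) (A : ℝ) (N : ℕ) (hN : 2 ≤ N) :
    freeEnergy (fun _ y => α * y ^ 2) (fun y => β * y ^ 2) N A -
        freeEnergy (fun _ y => α * y ^ 2) (fun _ => 0) N A =
      (1 / 2 : ℝ) * Real.log ((α + β) / α) +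
        α * β * A ^ 2 / (α + β) * (1 + β / ((N : ℝ) * (α + β) - β)) +
        (1 / 2 : ℝ) * Real.log (1 - β / ((N : ℝ) * (α + β))) := by
  obtain ⟨m, rfl⟩ := Nat.exists_eq_add_of_le' hN
  obtain ⟨K, hK, h⟩ := partition_eq α hα m (((m + 2 : ℕ) : ℝ) * A)
  have hβ' := h β hβ.le
  have h0 := h 0 le_rfl
  simp only [zero_mul, add_zero] at h0
  unfold freeEnergy
  rw [hβ', h0]
  have hm : (0 : ℝ) < (m : ℝ) + 1 := by positivity
  have hs1 : 0 < α + β + α / ((m : ℝ) + 1) := by positivity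
  have hs0 : 0 < α + α / ((m : ℝ) + 1) := by positivity
  rw [log_mul hK.ne' (by positivity), log_mul hK.ne' (by positivity),
    log_mul (by positivity) (exp_pos _).ne', log_mul (by positivity) (exp_pos _).ne',
    log_exp, log_exp, log_sqrt (by positivity), log_sqrt (by positivity),
    log_div pi_pos.ne' hs1.ne', log_div pi_pos.ne' hs0.ne']
  have hD : 0 < ((m + 2 : ℕ) : ℝ) * (α + β) - β := by
    push_cast
    nlinarith [mul_pos hm hβ, mul_pos hm hα]
  -- Up to the factor `(α + β) / α`, the quotient is the ratio of total compliances
  -- (sums of inverse stiffnesses).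
  have hlog : log (α + β + α / ((m : ℝ) + 1)) - log (α + α / ((m : ℝ) + 1)) =
      log ((α + β) / α) + log (1 - β / (((m + 2 : ℕ) : ℝ) * (α + β))) := by
    have h1 : 1 - β / (((m + 2 : ℕ) : ℝ) * (α + β)) =
        (((m + 2 : ℕ) : ℝ) * (α + β) - β) / (((m + 2 : ℕ) : ℝ) * (α + β)) := by
      field_simp
    rw [← log_div hs1.ne' hs0.ne', h1, ← log_mul (by positivity) (by positivity)]
    congr 1
    push_cast
    field_simp
    ring
  have hexp : (α + β) * (α / ((m : ℝ) + 1)) / (α + β + α / ((m : ℝ) + 1)) *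
        (((m + 2 : ℕ) : ℝ) * A) ^ 2 -
      α * (α / ((m : ℝ) + 1)) / (α + α / ((m : ℝ) + 1)) * (((m + 2 : ℕ) : ℝ) * A) ^ 2 =
      α * β * A ^ 2 / (α + β) * (1 + β / (((m + 2 : ℕ) : ℝ) * (α + β) - β)) := by
    have e1 : (α + β) * (α / ((m : ℝ) + 1)) / (α + β + α / ((m : ℝ) + 1)) =
        α * (α + β) / (((m + 2 : ℕ) : ℝ) * (α + β) - β) := by
      rw [div_eq_div_iff hs1.ne' hD.ne']
      push_cast
      field_simp
      ring
    have e0 : α * (α / ((m : ℝ) + 1)) / (α + α / ((m : ℝ) + 1)) = α / ((m + 2 : ℕ) : ℝ) := by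
      push_cast
      field_simp
      ring
    rw [e1, e0]
    have hM : (0 : ℝ) < ((m + 2 : ℕ) : ℝ) := by positivity
    generalize ((m + 2 : ℕ) : ℝ) = M at hD hM ⊢
    obtain ⟨D, hDdef⟩ : ∃ D, D = M * (α + β) - β := ⟨_, rfl⟩
    rw [← hDdef] at hD ⊢
    have e2 : M = (D + β) / (α + β) := by
      rw [hDdef]
      field_simp
      ring
    have hne : D + β ≠ 0 := by positivity
    rw [e2]
    field_simp
    ring
  linarith

/-- explicit defect-formation free energy for harmonic potentials
`ψ(y) = α y²`, `P(y) = β y²`, its thermodynamic limit, and the `1/N` rate. -/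
theorem harmonic_defect_formation_free_energy
    (α β : ℝ) (hα : 0 < α) (hβ : 0 < β) (A : ℝ) :
    (∀ N : ℕ, 2 ≤ N →
      freeEnergy (fun _ y => α * y ^ 2) (fun y => β * y ^ 2) N A -
        freeEnergy (fun _ y => α * y ^ 2) (fun _ => 0) N A =
      (1 / 2 : ℝ) * Real.log ((α + β) / α) + α * β * A ^ 2 / (α + β) -
        (N : ℝ) * α * β ^ 2 * A ^ 2 / ((N : ℝ) * (α + β) - β) ^ 2 +
        (α * β * A ^ 2 / (α + β)) *
          (2 * β / ((N : ℝ) * (α + β) - β) + β ^ 2 / ((N : ℝ) * (α + β) - β) ^ 2) +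
        (1 / 2 : ℝ) * Real.log (1 - β / ((N : ℝ) * (α + β)))) ∧
    Tendsto
      (fun N : ℕ =>
        freeEnergy (fun _ y => α * y ^ 2) (fun y => β * y ^ 2) N A -
          freeEnergy (fun _ y => α * y ^ 2) (fun _ => 0) N A)
      atTop
      (nhds (α * β * A ^ 2 / (α + β) + (1 / 2 : ℝ) * Real.log ((α + β) / α))) ∧
    ∃ C > 0, ∀ N : ℕ, 2 ≤ N →
      |(freeEnergy (fun _ y => α * y ^ 2) (fun y => β * y ^ 2) N A -
          freeEnergy (fun _ y => α * y ^ 2) (fun _ => 0) N A) -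
        (α * β * A ^ 2 / (α + β) + (1 / 2 : ℝ) * Real.log ((α + β) / α))| ≤ C / N := by
  have hαβ : 0 < α + β := by positivity
  have hD : ∀ N : ℕ, 2 ≤ N → (N : ℝ) * α ≤ (N : ℝ) * (α + β) - β := by
    intro N hN
    have : (2 : ℝ) ≤ N := by exact_mod_cast hN
    nlinarith
  have hrate : ∀ N : ℕ, 2 ≤ N →
      |(freeEnergy (fun _ y => α * y ^ 2) (fun y => β * y ^ 2) N A -
          freeEnergy (fun _ y => α * y ^ 2) (fun _ => 0) N A) -
        (α * β * A ^ 2 / (α + β) + (1 / 2 : ℝ) * Real.log ((α + β) / α))| ≤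
      (α * β * A ^ 2 / (α + β) + 1) * (β / α) / N := by
    intro N hN
    have hN0 : (0 : ℝ) < N := by exact_mod_cast (by omega : 0 < N)
    have hDN := hD N hN
    have hD0 : 0 < (N : ℝ) * (α + β) - β := lt_of_lt_of_le (by positivity) hDN
    rw [defect_free_energy α β hα hβ A N hN]
    set D := (N : ℝ) * (α + β) - β with hDdef
    have h1 : 1 - β / ((N : ℝ) * (α + β)) = D / ((N : ℝ) * (α + β)) := by
      rw [hDdef]
      field_simp
    have hpos : 0 < 1 - β / ((N : ℝ) * (α + β)) := by
      rw [h1]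
      positivity
    have hneg : log (1 - β / ((N : ℝ) * (α + β))) ≤ 0 := by
      apply log_nonpos hpos.le
      have : 0 ≤ β / ((N : ℝ) * (α + β)) := by positivity
      linarith
    -- From `1 - 1/t ≤ log t`, as `1/t - 1 = β/D` for `t = 1 - β/(N(α+β))`.
    have hlow : -(β / D) ≤ log (1 - β / ((N : ℝ) * (α + β))) := by
      refine le_trans (le_of_eq ?_) (one_sub_inv_le_log_of_pos hpos)
      rw [h1]
      field_simp
      rw [hDdef]
      ring
    have hbd : β / D ≤ β / α / N := by
      rw [div_div, mul_comm α]
      gcongr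
    have hc : 0 ≤ α * β * A ^ 2 / (α + β) := by positivity
    have hb0 : 0 ≤ β / D := by positivity
    have hm := mul_le_mul_of_nonneg_left hbd hc
    have hm0 := mul_nonneg hc hb0
    rw [mul_div_assoc (_ + _), add_mul, one_mul, abs_le]
    constructor <;> linarith
  refine ⟨fun N hN => ?_, ?_, _, ?_, hrate⟩
  · have hN0 : (0 : ℝ) < N := by exact_mod_cast (by omega : 0 < N)
    have hD0 : 0 < (N : ℝ) * (α + β) - β := lt_of_lt_of_le (by positivity) (hD N hN)
    rw [defect_free_energy α β hα hβ A N hN]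
    have : α * β * A ^ 2 / (α + β) * (1 + β / ((N : ℝ) * (α + β) - β)) =
        α * β * A ^ 2 / (α + β) -
        (N : ℝ) * α * β ^ 2 * A ^ 2 / ((N : ℝ) * (α + β) - β) ^ 2 +
        (α * β * A ^ 2 / (α + β)) *
          (2 * β / ((N : ℝ) * (α + β) - β) + β ^ 2 / ((N : ℝ) * (α + β) - β) ^ 2) := by
      obtain ⟨D, hDdef⟩ : ∃ D, D = (N : ℝ) * (α + β) - β := ⟨_, rfl⟩
      rw [← hDdef] at hD0 ⊢
      have e2 : (N : ℝ) = (D + β) / (α + β) := by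
        rw [hDdef]
        field_simp
        ring
      rw [e2]
      field_simp
      ring
    rw [this]
    ring
  · rw [tendsto_iff_dist_tendsto_zero]
    refine squeeze_zero' (Eventually.of_forall fun _ => dist_nonneg) ?_
      (tendsto_const_div_atTop_nhds_zero_nat ((α * β * A ^ 2 / (α + β) + 1) * (β / α)))
    filter_upwards [eventually_ge_atTop 2] with N hN
    rw [Real.dist_eq]
    exact hrate N hN
  · positivity
end
end

section
/- For the harmonic potentials ψ(y) = α·y² and P(y) = β·y² with external forces (h_i) ∈ ℓ¹, the thermodynamic limit of the defect-formation free energy exists and is given explicitly by G_∞(A) = lim_{N→∞} G_N(A) = (1/2)·log((α+β)/α) + α·β·A²/(α+β) + α·A·h₁/(α+β) − h₁²/(4·(α+β)) + A·H − (1/(4α))·H̄, where H = ∑_{i=2}^∞ h_i and H̄ = ∑_{i=2}^∞ h_i². -/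
/-!
The defect `β u₁²` is absorbed into the first bond because `u₀ = 0`, so both partition functions are
those of a chain with bond energies `aᵢ y² + hᵢ y`, where `aᵢ > 0`. Such a partition function is an
iterated Gaussian convolution: integrating out the last interior site is one completion of the
square, and induction on the length gives, for `m + 1` bonds and end point `b`,
`Z = √(π^m / (P S)) · exp (Q - (b + T)² / S)` with
`P = ∏ aᵢ`, `S = ∑ 1 / aᵢ`, `T = ∑ hᵢ / (2 aᵢ)`, `Q = ∑ hᵢ² / (4 aᵢ)`
(`lintegral_chain`, `freeEnergy_quadratic`). The induction runs on lower Lebesgue integrals, so that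
Tonelli's theorem applies with no integrability side conditions.

With `a₁ = α + β` and `aᵢ = α` for `i ≥ 2` one has `N - α S = β / (α + β)` for every `N`. Hence
`(N A + T)² / S - α N A² = A² (N / S) (β / (α + β)) + 2 A T (N / S) + T² / S`, and the limit follows
from `N / S → α`, `1 / S → 0` and the convergence of `T` and `Q`.
-/

noncomputable section

open MeasureTheory Real Filter

lemma bc_zero (n : ℕ) (b : ℝ) (u : Fin (n - 1) → ℝ) : bc n b u 0 = 0 := by
  simp [bc]

lemma bc_self (m : ℕ) (b : ℝ) (u : Fin (m + 1 - 1) → ℝ) : bc (m + 1) b u (m + 1) = b := by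
  simp [bc]

/-- The last interior site of a chain is the right end point of the chain with one bond less. -/
lemma bc_snoc (m : ℕ) (b x : ℝ) (u : Fin m → ℝ) (i : ℕ) (hi : i ≤ m + 1) :
    bc (m + 2) b (Fin.snoc (α := fun _ => ℝ) u x : Fin (m + 1) → ℝ) i = bc (m + 1) x u i := by
  unfold bc
  rcases Nat.eq_zero_or_pos i with rfl | h0
  · simp
  · rcases Nat.lt_or_ge i (m + 1) with h1 | h1
    · have h2 : i < m + 2 := by omega
      have h3 : i - 1 < m := by omega
      simp [h0, h1, h2, Fin.snoc, h3]
    · have h2 : i = m + 1 := by omega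
      subst h2
      simp [Fin.snoc]

lemma chainE_snoc (φ : ℕ → ℝ → ℝ) (m : ℕ) (b x : ℝ) (u : Fin m → ℝ) :
    chainE φ (m + 2) b (Fin.snoc (α := fun _ => ℝ) u x : Fin (m + 1) → ℝ) =
      chainE φ (m + 1) x u + φ (m + 2) (b - x) := by
  unfold chainE
  rw [Finset.sum_range_succ]
  congr 1
  · refine Finset.sum_congr rfl fun i hi => ?_
    have := Finset.mem_range.1 hi
    rw [bc_snoc _ _ _ _ _ (by omega), bc_snoc _ _ _ _ _ (by omega)]
  · rw [bc_snoc _ _ _ _ _ le_rfl, bc_self, bc_self]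

lemma measurable_chainE (a h : ℕ → ℝ) (n : ℕ) (b : ℝ) :
    Measurable (chainE (fun i y => a i * y ^ 2 + h i * y) n b) := by
  have hbc : ∀ i, Measurable fun u : Fin (n - 1) → ℝ => bc n b u i := by
    intro i
    unfold bc
    split_ifs <;> fun_prop
  unfold chainE
  refine Finset.measurable_sum _ fun i _ => ?_
  have h1 := hbc i
  have h2 := hbc (i + 1)
  fun_prop

lemma lintegral_gaussian_shift (c m : ℝ) (hc : 0 < c) :
    ∫⁻ x : ℝ, ENNReal.ofReal (Real.exp (-c * (x - m) ^ 2)) = ENNReal.ofReal (√(π / c)) := by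
  rw [← ofReal_integral_eq_lintegral_ofReal ((integrable_exp_neg_mul_sq hc).comp_sub_right m)
    (ae_of_all _ fun _ => (Real.exp_pos _).le)]
  rw [integral_sub_right_eq_self (fun x => Real.exp (-c * x ^ 2)) m, integral_gaussian]

/-- Convolution of the Gaussian weight `exp (-a y² - h y)` of one bond with the Gaussian weight of
the remaining chain: `1 / a` adds to `S` and `h / (2 a)` adds to `T`. -/
lemma lintegral_bond (a h S T b : ℝ) (ha : 0 < a) (hS : 0 < S) :
    ∫⁻ x : ℝ, ENNReal.ofReal (Real.exp (-(x + T) ^ 2 / S) *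
        Real.exp (-(a * (b - x) ^ 2 + h * (b - x)))) =
      ENNReal.ofReal (√(π / (a + 1 / S)) *
        Real.exp (h ^ 2 / (4 * a) - (b + (T + h / (2 * a))) ^ 2 / (S + 1 / a))) := by
  have hc : 0 < a + 1 / S := by positivity
  have key : ∀ x : ℝ, Real.exp (-(x + T) ^ 2 / S) *
        Real.exp (-(a * (b - x) ^ 2 + h * (b - x))) =
      Real.exp (-(a + 1 / S) *
          (x - (a * (b + (T + h / (2 * a))) / (a + 1 / S) - T)) ^ 2) *
        Real.exp (h ^ 2 / (4 * a) - (b + (T + h / (2 * a))) ^ 2 / (S + 1 / a)) := by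
    intro x
    rw [← Real.exp_add, ← Real.exp_add]
    congr 1
    have h1 : a * S + 1 ≠ 0 := by positivity
    have e1 : a + 1 / S = (a * S + 1) / S := by field_simp
    have e2 : S + 1 / a = (a * S + 1) / a := by field_simp
    rw [e1, e2]
    field_simp
    ring
  simp_rw [key]
  simp_rw [ENNReal.ofReal_mul (Real.exp_pos _).le]
  rw [lintegral_mul_const' _ _ ENNReal.ofReal_ne_top, lintegral_gaussian_shift _ _ hc,
    ENNReal.ofReal_mul (Real.sqrt_nonneg _)]

/-- The partition function of a chain of `m + 1` quadratic bonds with right end point `b`. -/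
lemma lintegral_chain_s18 (a h : ℕ → ℝ) (ha : ∀ i, 0 < a i) (m : ℕ) (b : ℝ) :
    ∫⁻ u : Fin m → ℝ, ENNReal.ofReal
        (Real.exp (-(chainE (fun i y => a i * y ^ 2 + h i * y) (m + 1) b u))) =
      ENNReal.ofReal (√(π ^ m / ((∏ i ∈ Finset.range (m + 1), a (i + 1)) *
          ∑ i ∈ Finset.range (m + 1), 1 / a (i + 1))) *
        Real.exp ((∑ i ∈ Finset.range (m + 1), h (i + 1) ^ 2 / (4 * a (i + 1))) -
          (b + ∑ i ∈ Finset.range (m + 1), h (i + 1) / (2 * a (i + 1))) ^ 2 /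
            ∑ i ∈ Finset.range (m + 1), 1 / a (i + 1))) := by
  induction m generalizing b with
  | zero =>
    have h1 := ha 1
    have h2 : ∀ u : Fin 0 → ℝ, chainE (fun i y => a i * y ^ 2 + h i * y) (0 + 1) b u =
        a 1 * b ^ 2 + h 1 * b := by
      intro u
      have := bc_self 0 b u
      simp only [zero_add] at this
      simp [chainE, bc_zero, this]
    simp_rw [h2]
    have h3 : a 1 * (1 / a 1) = 1 := by field_simp
    simp only [lintegral_const, zero_add, Finset.range_one, Finset.prod_singleton,
      Finset.sum_singleton, pow_zero, h3, div_one, Real.sqrt_one, one_mul]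
    simp only [volume_pi, Measure.pi_univ, Finset.univ_eq_empty, Finset.prod_empty, mul_one]
    congr 2
    field_simp
    ring
  | succ m ih =>
    have hvp := (volume_preserving_piFinSuccAbove (fun _ : Fin (m + 1) => ℝ) (Fin.last m)).symm
    rw [← hvp.lintegral_comp_emb (MeasurableEquiv.measurableEmbedding _)]
    have hmeas : Measurable fun u : Fin (m + 1) → ℝ => ENNReal.ofReal
        (Real.exp (-(chainE (fun i y => a i * y ^ 2 + h i * y) (m + 1 + 1) b u))) :=
      ENNReal.measurable_ofReal.comp
        (Real.measurable_exp.comp (measurable_chainE a h (m + 1 + 1) b).neg)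
    rw [Measure.volume_eq_prod]
    refine (lintegral_prod _ (hmeas.comp (MeasurableEquiv.piFinSuccAbove
        (fun _ : Fin (m + 1) => ℝ) (Fin.last m)).symm.measurable).aemeasurable).trans ?_
    have hsplit : ∀ (x : ℝ) (u : Fin m → ℝ), ENNReal.ofReal
        (Real.exp (-(chainE (fun i y => a i * y ^ 2 + h i * y) (m + 1 + 1) b
          ((MeasurableEquiv.piFinSuccAbove (fun _ : Fin (m + 1) => ℝ) (Fin.last m)).symm
            (x, u))))) =
        ENNReal.ofReal
          (Real.exp (-(chainE (fun i y => a i * y ^ 2 + h i * y) (m + 1) x u))) *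
        ENNReal.ofReal (Real.exp (-(a (m + 2) * (b - x) ^ 2 + h (m + 2) * (b - x)))) := by
      intro x u
      have : (MeasurableEquiv.piFinSuccAbove (fun _ : Fin (m + 1) => ℝ) (Fin.last m)).symm (x, u)
          = (Fin.snoc (α := fun _ => ℝ) u x : Fin (m + 1) → ℝ) := by
        simp [MeasurableEquiv.piFinSuccAbove, Fin.insertNthEquiv, Fin.insertNth_last']
      rw [this, chainE_snoc, neg_add, Real.exp_add, ENNReal.ofReal_mul (Real.exp_pos _).le]
    simp_rw [Function.comp_apply, hsplit]
    simp_rw [lintegral_mul_const' _ _ ENNReal.ofReal_ne_top]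
    simp_rw [ih]
    rw [Finset.prod_range_succ _ (m + 1), Finset.sum_range_succ _ (m + 1),
      Finset.sum_range_succ _ (m + 1), Finset.sum_range_succ _ (m + 1)]
    have hS : 0 < ∑ i ∈ Finset.range (m + 1), 1 / a (i + 1) :=
      Finset.sum_pos (fun i _ => one_div_pos.2 (ha _)) (by simp)
    have hP : 0 < ∏ i ∈ Finset.range (m + 1), a (i + 1) := Finset.prod_pos fun i _ => ha _
    have hA := ha (m + 2)
    simp only [show m + 1 + 1 = m + 2 from rfl]
    generalize (∑ i ∈ Finset.range (m + 1), 1 / a (i + 1)) = S at *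
    generalize (∏ i ∈ Finset.range (m + 1), a (i + 1)) = P at *
    generalize (∑ i ∈ Finset.range (m + 1), h (i + 1) ^ 2 / (4 * a (i + 1))) = Q at *
    generalize (∑ i ∈ Finset.range (m + 1), h (i + 1) / (2 * a (i + 1))) = T at *
    have hre : ∀ x : ℝ, ENNReal.ofReal (√(π ^ m / (P * S)) * Real.exp (Q - (x + T) ^ 2 / S)) *
        ENNReal.ofReal (Real.exp (-(a (m + 2) * (b - x) ^ 2 + h (m + 2) * (b - x)))) =
        ENNReal.ofReal (√(π ^ m / (P * S)) * Real.exp Q) *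
        ENNReal.ofReal (Real.exp (-(x + T) ^ 2 / S) *
          Real.exp (-(a (m + 2) * (b - x) ^ 2 + h (m + 2) * (b - x)))) := by
      intro x
      rw [← ENNReal.ofReal_mul (by positivity), ← ENNReal.ofReal_mul (by positivity),
        sub_eq_add_neg, Real.exp_add, neg_div]
      congr 1
      ring
    simp_rw [hre]
    rw [lintegral_const_mul' _ _ ENNReal.ofReal_ne_top, lintegral_bond _ _ _ _ _ hA hS,
      ← ENNReal.ofReal_mul (by positivity)]
    congr 1
    have hsq : √(π ^ (m + 1) / (P * a (m + 2) * (S + 1 / a (m + 2)))) =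
        √(π ^ m / (P * S)) * √(π / (a (m + 2) + 1 / S)) := by
      rw [← Real.sqrt_mul (by positivity)]
      congr 1
      have h1 : a (m + 2) * S + 1 ≠ 0 := by positivity
      have e1 : a (m + 2) + 1 / S = (a (m + 2) * S + 1) / S := by field_simp
      have e2 : S + 1 / a (m + 2) = (a (m + 2) * S + 1) / a (m + 2) := by field_simp
      rw [e1, e2]
      field_simp
      rw [pow_succ]
    rw [hsq, add_sub_assoc, Real.exp_add]
    ring

lemma freeEnergy_quadratic (a h : ℕ → ℝ) (ha : ∀ i, 0 < a i) (m : ℕ) (A : ℝ) :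
    freeEnergy (fun i y => a i * y ^ 2 + h i * y) (fun _ => 0) (m + 1) A =
      (1 / 2) * Real.log ((∏ i ∈ Finset.range (m + 1), a (i + 1)) *
          ∑ i ∈ Finset.range (m + 1), 1 / a (i + 1)) - (1 / 2) * Real.log (π ^ m) -
        (∑ i ∈ Finset.range (m + 1), h (i + 1) ^ 2 / (4 * a (i + 1))) +
        ((m + 1 : ℝ) * A + ∑ i ∈ Finset.range (m + 1), h (i + 1) / (2 * a (i + 1))) ^ 2 /
            ∑ i ∈ Finset.range (m + 1), 1 / a (i + 1) := by
  have hS : 0 < ∑ i ∈ Finset.range (m + 1), 1 / a (i + 1) :=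
    Finset.sum_pos (fun i _ => one_div_pos.2 (ha _)) (by simp)
  have hP : 0 < ∏ i ∈ Finset.range (m + 1), a (i + 1) := Finset.prod_pos fun i _ => ha _
  unfold freeEnergy
  simp only [sub_zero]
  have hmeas : Measurable fun u : Fin (m + 1 - 1) → ℝ => Real.exp
      (-(chainE (fun i y => a i * y ^ 2 + h i * y) (m + 1) (((m + 1 : ℕ) : ℝ) * A) u)) :=
    Real.measurable_exp.comp (measurable_chainE a h (m + 1) (((m + 1 : ℕ) : ℝ) * A)).neg
  have hL := lintegral_chain_s18 a h ha m (((m + 1 : ℕ) : ℝ) * A)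
  rw [integral_eq_lintegral_of_nonneg_ae (ae_of_all _ fun _ => (Real.exp_pos _).le)
    hmeas.aestronglyMeasurable]
  have hπ := Real.pi_pos
  erw [hL]
  rw [ENNReal.toReal_ofReal (by positivity),
    Real.log_mul (by positivity) (by positivity), Real.log_exp, Real.log_sqrt (by positivity),
    Real.log_div (by positivity) (by positivity)]
  push_cast
  ring

/-- A quadratic defect at the first site stiffens the first bond, since `u₀ = 0`. -/
lemma freeEnergy_defect (α β : ℝ) (h : ℕ → ℝ) (m : ℕ) (A : ℝ) :
    freeEnergy (fun i y => α * y ^ 2 + h i * y) (fun y => β * y ^ 2) (m + 1) A =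
      freeEnergy (fun i y => (if i = 1 then α + β else α) * y ^ 2 + h i * y) (fun _ => 0)
        (m + 1) A := by
  unfold freeEnergy
  congr 2
  refine integral_congr_ae (ae_of_all _ fun u => ?_)
  simp only [sub_zero]
  congr 1
  unfold chainE
  rw [Finset.sum_range_succ', Finset.sum_range_succ']
  simp [bc_zero]
  ring

lemma summable_sq_of_summable_abs (h : ℕ → ℝ) (hh : Summable fun i => |h i|) :
    Summable fun i => h i ^ 2 := by
  refine Summable.of_norm_bounded_eventually hh ?_
  rw [Nat.cofinite_eq_atTop]
  filter_upwards [hh.tendsto_atTop_zero.eventually (gt_mem_nhds one_pos)] with i hi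
  rw [Real.norm_eq_abs, abs_pow]
  nlinarith [abs_nonneg (h i)]

/-- Closed form of the defect-formation free energy of a chain with `m + 1` bonds. -/
lemma defect_difference (α β : ℝ) (hα : 0 < α) (hβ : 0 < β) (h : ℕ → ℝ) (A : ℝ) (m : ℕ)
    (S T : ℝ) (hS : S = m / α + 1 / (α + β))
    (hT : T = (∑ i ∈ Finset.range m, h (i + 2)) / (2 * α) + h 1 / (2 * (α + β))) :
    freeEnergy (fun i y => α * y ^ 2 + h i * y) (fun y => β * y ^ 2) (m + 1) A -
        freeEnergy (fun _ y => α * y ^ 2) (fun _ => 0) (m + 1) A =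
      (1 / 2) * Real.log ((α + β) / ((m + 1 : ℝ) / S)) -
        ((∑ i ∈ Finset.range m, h (i + 2) ^ 2) / (4 * α) + h 1 ^ 2 / (4 * (α + β))) +
        (A ^ 2 * ((m + 1 : ℝ) / S) * (β / (α + β)) + 2 * A * T * ((m + 1 : ℝ) / S) +
          T ^ 2 * (1 / S)) := by
  have h0 : freeEnergy (fun _ y => α * y ^ 2) (fun _ => 0) (m + 1) A =
      freeEnergy (fun i y => (fun _ => α) i * y ^ 2 + (fun _ => (0 : ℝ)) i * y) (fun _ => 0)
        (m + 1) A := by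
    simp
  have hSpos : 0 < S := by rw [hS]; positivity
  rw [h0, freeEnergy_quadratic _ _ (fun _ => hα), freeEnergy_defect,
    freeEnergy_quadratic (fun i => if i = 1 then α + β else α) h
      (fun i => by split_ifs <;> positivity)]
  simp only [Finset.sum_range_succ', Finset.prod_range_succ']
  simp only [zero_add, if_true, Nat.add_eq_right, Nat.add_eq_zero_iff, one_ne_zero, and_false,
    if_false, Finset.prod_const, Finset.sum_const, Finset.card_range, nsmul_eq_mul, ← Finset.sum_div]
  simp only [add_assoc, Nat.reduceAdd]
  have e1 : (m : ℝ) * (1 / α) + 1 / (α + β) = S := by rw [hS]; ring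
  have e2 : (m : ℝ) * (1 / α) + 1 / α = (m + 1) / α := by ring
  rw [e1, e2, ← hT]
  have hlog : Real.log ((α + β) / ((m + 1 : ℝ) / S)) =
      Real.log (α ^ m * (α + β) * S) - Real.log (α ^ m * α * ((m + 1) / α)) := by
    rw [← Real.log_div (by positivity) (by positivity)]
    congr 1
    field_simp
  rw [hlog]
  have hNS : (m + 1 : ℝ) = α * S + β / (α + β) := by
    rw [hS]; field_simp; ring
  have hq : ((m + 1 : ℝ) * A + T) ^ 2 / S - ((m + 1 : ℝ) * A) ^ 2 / ((m + 1) / α) =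
      A ^ 2 * ((m + 1 : ℝ) / S) * (β / (α + β)) + 2 * A * T * ((m + 1 : ℝ) / S) +
          T ^ 2 * (1 / S) := by
    have hd : β / (α + β) = (m + 1 : ℝ) - α * S := by linarith
    rw [hd]
    field_simp
    ring
  simp only [zero_div, mul_zero, add_zero, ne_eq, OfNat.ofNat_ne_zero, not_false_eq_true, zero_pow]
  linarith

/-- thermodynamic limit of the defect-formation free energy for harmonic
potentials `ψ(y) = α y²`, `P(y) = β y²` with external forces `h ∈ ℓ¹`. -/
theorem harmonic_defect_formation_free_energy_with_forces
    (α β : ℝ) (hα : 0 < α) (hβ : 0 < β)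
    (h : ℕ → ℝ) (hh : Summable fun i => |h i|) (A : ℝ) :
    Tendsto
      (fun N : ℕ =>
        freeEnergy (fun i y => α * y ^ 2 + h i * y) (fun y => β * y ^ 2) N A -
          freeEnergy (fun _ y => α * y ^ 2) (fun _ => 0) N A)
      atTop
      (nhds ((1 / 2 : ℝ) * Real.log ((α + β) / α) + α * β * A ^ 2 / (α + β) +
        α * A * h 1 / (α + β) - h 1 ^ 2 / (4 * (α + β)) +
        A * (∑' i : ℕ, h (i + 2)) - (1 / (4 * α)) * (∑' i : ℕ, (h (i + 2)) ^ 2))) := by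
  rw [← tendsto_add_atTop_iff_nat 1]
  simp_rw [defect_difference α β hα hβ h A _ _ _ rfl rfl]
  have hab : 0 < α + β := by positivity
  have hm : Tendsto (fun m : ℕ => (m : ℝ)) atTop atTop := tendsto_natCast_atTop_atTop
  have hSinf : Tendsto (fun m : ℕ => (m : ℝ) / α + 1 / (α + β)) atTop atTop :=
    tendsto_atTop_add_const_right _ _ (hm.atTop_div_const hα)
  have hSinv : Tendsto (fun m : ℕ => 1 / ((m : ℝ) / α + 1 / (α + β))) atTop (nhds 0) := by
    simpa only [one_div, Pi.inv_def] using hSinf.inv_tendsto_atTop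
  have hr : Tendsto (fun m : ℕ => ((m : ℝ) + 1) / ((m : ℝ) / α + 1 / (α + β))) atTop
      (nhds α) := by
    have h1 : Tendsto (fun m : ℕ => α + (β / (α + β)) * (1 / ((m : ℝ) / α + 1 / (α + β)))) atTop
        (nhds (α + (β / (α + β)) * 0)) := tendsto_const_nhds.add (tendsto_const_nhds.mul hSinv)
    rw [mul_zero, add_zero] at h1
    refine h1.congr fun m => ?_
    have : 0 < (m : ℝ) / α + 1 / (α + β) := by positivity
    rw [eq_div_iff this.ne', add_mul, mul_assoc, one_div_mul_cancel this.ne']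
    field_simp
    ring
  have hT : Tendsto (fun m : ℕ =>
      (∑ i ∈ Finset.range m, h (i + 2)) / (2 * α) + h 1 / (2 * (α + β))) atTop
      (nhds ((∑' i : ℕ, h (i + 2)) / (2 * α) + h 1 / (2 * (α + β)))) :=
    ((((summable_nat_add_iff 2).2 hh.of_abs).hasSum.tendsto_sum_nat).div_const _).add_const _
  have hQ : Tendsto (fun m : ℕ =>
      (∑ i ∈ Finset.range m, h (i + 2) ^ 2) / (4 * α) + h 1 ^ 2 / (4 * (α + β))) atTop
      (nhds ((∑' i : ℕ, h (i + 2) ^ 2) / (4 * α) + h 1 ^ 2 / (4 * (α + β)))) :=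
    ((((summable_nat_add_iff 2).2
      (summable_sq_of_summable_abs h hh)).hasSum.tendsto_sum_nat).div_const _).add_const _
  have hlog : Tendsto (fun m : ℕ =>
      Real.log ((α + β) / (((m : ℝ) + 1) / ((m : ℝ) / α + 1 / (α + β))))) atTop
      (nhds (Real.log ((α + β) / α))) :=
    (tendsto_const_nhds.div hr hα.ne').log (by positivity)
  have hfin := ((hlog.const_mul (1 / 2)).sub hQ).add
    ((((hr.const_mul (A ^ 2)).mul_const (β / (α + β))).add ((hT.const_mul (2 * A)).mul hr)).add
      ((hT.pow 2).mul hSinv))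
  convert hfin using 2
  field_simp
  ring
end
end
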